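/- Let R be a Noetherian ring, 𝔞 an ideal, M a finitely generated R-module, and t ≥ 0 an integer such that H^i_𝔞(M) is weakly Laskerian for all i ≤ t. Then H^i_𝔞(M) is 𝔞-cofinite for all i ≤ t, and the R-modules Hom_R(R/𝔞, H^{t+1}_𝔞(M)) and Ext^1_R(R/𝔞, H^{t+1}_𝔞(M)) are finitely generated; in particular Ass_R(H^{t+1}_𝔞(M)) is finite. -/

import Mathlib

open CategoryTheory

universe u

variable (R : Type u) [CommRing R]

/-- The `i`-th Ext module `Ext^i_R(N, M)` of `R`-modules. -/
noncomputable def extModule (i : ℕ) (N M : ModuleCat.{u} R) : ModuleCat.{u} R :=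
  ((Ext R (ModuleCat.{u} R) i).obj (Opposite.op N)).obj M

/-- A module is weakly Laskerian if every quotient has finitely many associated primes. -/
def IsWeaklyLaskerian (M : Type u) [AddCommGroup M] [Module R M] : Prop :=
  ∀ N : Submodule R M, (associatedPrimes R (M ⧸ N)).Finite

/-- `M` is `𝔞`-cofinite: `Supp M ⊆ V(𝔞)` and all `Ext^i_R(R/𝔞, M)` are finitely generated. -/
def IsCofinite (𝔞 : Ideal R) (M : ModuleCat.{u} R) : Prop :=
  Module.support R M ⊆ PrimeSpectrum.zeroLocus (𝔞 : Set R) ∧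
    ∀ i : ℕ, Module.Finite R (extModule R i (ModuleCat.of R (R ⧸ 𝔞)) M)

/-- `M` is `𝔞`-weakly cofinite: `Supp M ⊆ V(𝔞)` and all `Ext^i_R(R/𝔞, M)` are weakly
Laskerian. -/
def IsWeaklyCofinite (𝔞 : Ideal R) (M : ModuleCat.{u} R) : Prop :=
  Module.support R M ⊆ PrimeSpectrum.zeroLocus (𝔞 : Set R) ∧
    ∀ i : ℕ, IsWeaklyLaskerian R (extModule R i (ModuleCat.of R (R ⧸ 𝔞)) M)

/-- The Krull dimension of the support of a module. -/
noncomputable def suppDim (M : Type u) [AddCommGroup M] [Module R M] : WithBot ℕ∞ :=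
  Order.krullDim (Module.support R M)

/-- The cohomological dimension `cd(𝔞, M) = sup {i | H^i_𝔞(M) ≠ 0}`, as an element of `ℕ∞`. -/
noncomputable def cohomologicalDim (𝔞 : Ideal R) (M : ModuleCat.{u} R) : ℕ∞ :=
  ⨆ i ∈ {i : ℕ | Nontrivial ((localCohomology 𝔞 i).obj M)}, (i : ℕ∞)

/-- `p` is an attached prime of `M`: `p` is prime and is the annihilator of a quotient
of `M`. -/
def IsAttachedPrime (M : Type u) [AddCommGroup M] [Module R M] (p : Ideal R) : Prop :=
  p.IsPrime ∧ ∃ N : Submodule R M, p = Module.annihilator R (M ⧸ N)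

namespace WLC

section FSF
variable {R : Type u} [CommRing R]

theorem assoc_iff [IsNoetherianRing R] {M : Type u} [AddCommGroup M] [Module R M] (q : Ideal R) :
    q ∈ associatedPrimes R M ↔ q.IsPrime ∧ ∃ x : M, ∀ r, r ∈ q ↔ r • x = 0 := by
  rw [AssociatedPrimes.mem_iff, isAssociatedPrime_iff]
  refine and_congr_right fun _ => exists_congr fun x => ?_
  simp [Ideal.ext_iff, Submodule.mem_colon_singleton]

theorem mem_supp_quot {M : Type u} [AddCommGroup M] [Module R M] (N : Submodule R M)
    (p : PrimeSpectrum R) :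
    p ∈ Module.support R (M ⧸ N) ↔ ∃ y : M, ∀ t : R, t • y ∈ N → t ∈ p.asIdeal := by
  rw [Module.mem_support_iff']
  constructor
  · rintro ⟨z, hz⟩
    obtain ⟨y, rfl⟩ := N.mkQ_surjective z
    refine ⟨y, fun t ht => ?_⟩
    by_contra h
    apply hz t h
    rw [← map_smul, Submodule.mkQ_apply, Submodule.Quotient.mk_eq_zero]
    exact ht
  · rintro ⟨y, hy⟩
    refine ⟨N.mkQ y, fun t ht h => ht (hy t ?_)⟩
    rw [← map_smul, Submodule.mkQ_apply, Submodule.Quotient.mk_eq_zero] at h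
    exact h

theorem exists_assoc_le [IsNoetherianRing R] {M : Type u} [AddCommGroup M] [Module R M]
    (p : PrimeSpectrum R) (hp : p ∈ Module.support R M) :
    ∃ q ∈ associatedPrimes R M, q ≤ p.asIdeal := by
  obtain ⟨z, hz⟩ := Module.mem_support_iff_exists_annihilator.1 hp
  have : (Submodule.span R {z}).annihilator ≤ p.asIdeal := by
    simpa using hz
  obtain ⟨q, hq, hqp⟩ := Ideal.exists_minimalPrimes_le this
  refine ⟨q, ?_, hqp⟩
  have h1 : q ∈ associatedPrimes R (Submodule.span R {z}) :=
    Module.associatedPrimes.minimalPrimes_annihilator_subset_associatedPrimes R _ hq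
  exact IsAssociatedPrime.map_of_injective (f := (Submodule.span R {z}).subtype) h1
    (Submodule.injective_subtype _)

theorem supp_of_assoc [IsNoetherianRing R] {M : Type u} [AddCommGroup M] [Module R M]
    (p : PrimeSpectrum R) (hp : p.asIdeal ∈ associatedPrimes R M) : p ∈ Module.support R M := by
  obtain ⟨_, x, hx⟩ := (assoc_iff _).1 hp
  rw [Module.mem_support_iff']
  exact ⟨x, fun r hr h => hr ((hx r).2 h)⟩

theorem supp_of_sInf [IsNoetherianRing R] {M : Type u} [AddCommGroup M] [Module R M]
    (hM : (associatedPrimes R M).Finite)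
    (p : PrimeSpectrum R) (hp : PrimeSpectrum.vanishingIdeal (Module.support R M) ≤ p.asIdeal) :
    p ∈ Module.support R M := by
  have h1 : hM.toFinset.inf id ≤ p.asIdeal := by
    refine le_trans ?_ hp
    intro r hr
    rw [PrimeSpectrum.mem_vanishingIdeal]
    intro q hq
    obtain ⟨q', hq', hle⟩ := exists_assoc_le q hq
    exact hle ((Finset.inf_le (f := id) (hM.mem_toFinset.2 hq') : _ ≤ q') hr)
  obtain ⟨q, hq, hqp⟩ := (Ideal.IsPrime.inf_le' p.2).1 h1
  have hq' := hM.mem_toFinset.1 hq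
  exact Module.mem_support_mono (p := ⟨q, hq'.1⟩) hqp (supp_of_assoc ⟨q, hq'.1⟩ hq')

theorem fsf_step [IsNoetherianRing R] {M : Type u} [AddCommGroup M] [Module R M]
    (P : Ideal R) [hP : P.IsPrime] (hinf : (PrimeSpectrum.zeroLocus (P : Set R)).Infinite)
    (hfin : ∀ r ∉ P, (PrimeSpectrum.zeroLocus ((P ⊔ Ideal.span {r} : Ideal R) : Set R)).Finite)
    (hsupp : ∀ N : Submodule R M, N.FG → ∃ y : M, ∀ t : R, t • y ∈ N → t ∈ P)
    (N U : Submodule R M) (r : R) (hN : N.FG) (hU : U ≤ N) (hr : r ∉ P) (hrN : ∀ n ∈ N, r • n ∈ U) :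
    ∃ (N' U' : Submodule R M) (r' : R) (q : Ideal R) (z : M), N'.FG ∧ U' ≤ N' ∧ r' ∉ P ∧
      (∀ n ∈ N', r' • n ∈ U') ∧ N ≤ N' ∧ U ≤ U' ∧ (∀ n ∈ N, n ∈ U' → n ∈ U) ∧ q.IsPrime ∧
      z ∈ N' ∧ (∀ s, s • z ∈ U' ↔ s ∈ q) ∧ r ∉ q := by
  obtain ⟨q, hqP, hq⟩ : ∃ q : PrimeSpectrum R, q ∈ PrimeSpectrum.zeroLocus (P : Set R) ∧
      q ∉ insert (⟨P, hP⟩ : PrimeSpectrum R)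
        (PrimeSpectrum.zeroLocus ((P ⊔ Ideal.span {r} : Ideal R) : Set R)) := by
    by_contra! h
    exact hinf (((hfin r hr).insert _).subset h)
  have hPq : P ≤ q.asIdeal := hqP
  have hrq : r ∉ q.asIdeal := by
    intro h
    apply hq
    right
    change P ⊔ Ideal.span {r} ≤ q.asIdeal
    refine sup_le hPq ?_
    rwa [Ideal.span_singleton_le_iff_mem]
  obtain ⟨w, hwq, hwP⟩ : ∃ w ∈ q.asIdeal, w ∉ P := by
    by_contra! h
    apply hq
    left
    exact PrimeSpectrum.ext (le_antisymm h hPq)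
  obtain ⟨y, hy⟩ := hsupp N hN
  -- the chain of ideals
  let I : ℕ →o Ideal R :=
    { toFun := fun k =>
        { carrier := {t | (r ^ k * t) • y ∈ N}
          add_mem' := by
            intro a b ha hb
            simp only [Set.mem_ofPred_eq, mul_add, add_smul] at *
            exact N.add_mem ha hb
          zero_mem' := by simp
          smul_mem' := by
            intro c x hx
            simp only [Set.mem_ofPred_eq, smul_eq_mul] at *
            have := N.smul_mem c hx
            rw [smul_smul] at this
            convert this using 2
            ring }
      monotone' := by
        apply monotone_nat_of_le_succ
        intro k t ht
        change (r ^ (k+1) * t) • y ∈ N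
        have := N.smul_mem r (show (r ^ k * t) • y ∈ N from ht)
        rw [smul_smul] at this
        convert this using 2
        ring }
  obtain ⟨k, hk⟩ := (monotone_stabilizes_iff_noetherian (R := R) (M := R)).2 inferInstance I
  have key : ∀ t, (r ^ (k+1) * t) • y ∈ N → (r ^ (k+1) * t) • y ∈ U := by
    intro t ht
    have h1 : t ∈ I (k+1) := ht
    rw [← hk (k+1) (Nat.le_succ k)] at h1
    have h2 := hrN _ (show (r ^ k * t) • y ∈ N from h1)
    rw [smul_smul] at h2
    convert h2 using 2
    ring
  set z : M := r ^ (k+1) • y with hz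
  have key' : ∀ t : R, t • z ∈ N → t • z ∈ U := by
    intro t ht
    rw [hz, smul_smul, mul_comm] at ht ⊢
    exact key t ht
  have hmem : ∀ v : M, v ∈ U ⊔ Submodule.map (LinearMap.toSpanSingleton R M z) q.asIdeal ↔
      ∃ u ∈ U, ∃ t : R, t ∈ q.asIdeal ∧ u + t • z = v := by
    intro v
    simp [Submodule.mem_sup]
  refine ⟨N ⊔ Submodule.span R {y}, U ⊔ Submodule.map (LinearMap.toSpanSingleton R M z) q.asIdeal,
    r ^ (k+1) * w, q.asIdeal, z, hN.sup (Submodule.fg_span_singleton y), ?_, ?_, ?_, le_sup_left,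
    le_sup_left, ?_, q.2, ?_, ?_, hrq⟩
  · refine sup_le_sup hU ?_
    rintro _ ⟨t, _, rfl⟩
    rw [hz]
    simp only [LinearMap.toSpanSingleton_apply]
    exact Submodule.smul_mem _ _ (Submodule.smul_mem _ _ (Submodule.mem_span_singleton_self y))
  · intro h
    rcases hP.mem_or_mem h with h | h
    · exact hr (hP.mem_of_pow_mem _ h)
    · exact hwP h
  · intro n hn
    obtain ⟨n1, hn1, n2, hn2, rfl⟩ := Submodule.mem_sup.1 hn
    obtain ⟨c, rfl⟩ := Submodule.mem_span_singleton.1 hn2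
    rw [hmem]
    refine ⟨(r ^ (k+1) * w) • n1, ?_, c * w, q.asIdeal.mul_mem_left _ hwq, ?_⟩
    · have := U.smul_mem (r ^ k * w) (hrN n1 hn1)
      rw [smul_smul] at this
      convert this using 2
      ring
    · rw [hz, smul_add, smul_smul, smul_smul]
      congr 2
      ring
  · intro n hn hnU
    obtain ⟨u, hu, t, ht, rfl⟩ := (hmem _).1 hnU
    refine U.add_mem hu (key' t ?_)
    have := N.sub_mem hn (hU hu)
    simpa using this
  · rw [hz]
    exact Submodule.mem_sup_right (Submodule.smul_mem _ _ (Submodule.mem_span_singleton_self y))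
  · intro s
    rw [hmem]
    constructor
    · rintro ⟨u, hu, t, ht, h⟩
      have h1 : (s - t) • z = u := by rw [sub_smul, ← h]; abel
      have h2 : (s - t) • z ∈ N := by rw [h1]; exact hU hu
      rw [hz, smul_smul] at h2
      have h3 := hPq (hy _ h2)
      rcases q.2.mem_or_mem h3 with h4 | h4
      · have := q.asIdeal.add_mem h4 ht
        simpa using this
      · exact (hrq (q.2.mem_of_pow_mem _ h4)).elim
    · intro hs
      exact ⟨0, U.zero_mem, s, hs, by simp⟩

theorem fsf_inf [IsNoetherianRing R] {M : Type u} [AddCommGroup M] [Module R M]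
    (P : Ideal R) [hP : P.IsPrime] (hinf : (PrimeSpectrum.zeroLocus (P : Set R)).Infinite)
    (hfin : ∀ r ∉ P, (PrimeSpectrum.zeroLocus ((P ⊔ Ideal.span {r} : Ideal R) : Set R)).Finite)
    (hsupp : ∀ N : Submodule R M, N.FG → ∃ y : M, ∀ t : R, t • y ∈ N → t ∈ P) :
    ∃ U : Submodule R M, (associatedPrimes R (M ⧸ U)).Infinite := by
  let σ := {x : Submodule R M × Submodule R M × R // x.1.FG ∧ x.2.1 ≤ x.1 ∧ x.2.2 ∉ P ∧
    ∀ n ∈ x.1, x.2.2 • n ∈ x.2.1}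
  have step : ∀ x : σ, ∃ y : σ, ∃ (q : Ideal R) (z : M), x.1.1 ≤ y.1.1 ∧ x.1.2.1 ≤ y.1.2.1 ∧
      (∀ n ∈ x.1.1, n ∈ y.1.2.1 → n ∈ x.1.2.1) ∧ q.IsPrime ∧ z ∈ y.1.1 ∧
      (∀ s, s • z ∈ y.1.2.1 ↔ s ∈ q) ∧ x.1.2.2 ∉ q := by
    rintro ⟨⟨N, U, r⟩, hN, hU, hr, hrN⟩
    obtain ⟨N', U', r', q, z, h1, h2, h3, h4, h5⟩ := fsf_step P hinf hfin hsupp N U r hN hU hr hrN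
    exact ⟨⟨⟨N', U', r'⟩, h1, h2, h3, h4⟩, q, z, h5⟩
  choose nx q z h1 h2 h3 h4 h5 h6 h7 using step
  let x0 : σ := ⟨⟨⊥, ⊥, 1⟩, Submodule.fg_bot, le_rfl,
    fun h => hP.ne_top ((Ideal.eq_top_iff_one _).2 h), by simp⟩
  let x : ℕ → σ := fun n => nx^[n] x0
  have xs : ∀ n, x (n+1) = nx (x n) := fun n => Function.iterate_succ_apply' nx n x0
  have mN : Monotone fun n => (x n).1.1 := monotone_nat_of_le_succ fun n => by
    change (x n).1.1 ≤ (x (n+1)).1.1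
    rw [xs]; exact h1 _
  have mU : Monotone fun n => (x n).1.2.1 := monotone_nat_of_le_succ fun n => by
    change (x n).1.2.1 ≤ (x (n+1)).1.2.1
    rw [xs]; exact h2 _
  have hcap : ∀ n k, ∀ v ∈ (x n).1.1, v ∈ (x (n+k)).1.2.1 → v ∈ (x n).1.2.1 := by
    intro n k
    induction k with
    | zero => exact fun v _ h => h
    | succ k ih =>
      intro v hv h
      apply ih v hv
      rw [← add_assoc, xs] at h
      exact h3 _ v (mN (Nat.le_add_right n k) hv) h
  let U : Submodule R M := ⨆ n, (x n).1.2.1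
  have memU : ∀ v, v ∈ U ↔ ∃ n, v ∈ (x n).1.2.1 := fun v =>
    Submodule.mem_iSup_of_directed _ mU.directed_le
  have hcapU : ∀ n, ∀ v ∈ (x n).1.1, v ∈ U → v ∈ (x n).1.2.1 := by
    intro n v hv h
    obtain ⟨m, hm⟩ := (memU v).1 h
    exact hcap n m v hv (mU (Nat.le_add_left m n) hm)
  refine ⟨U, ?_⟩
  have hzN : ∀ n, z (x n) ∈ (x (n+1)).1.1 := fun n => by rw [xs]; exact h5 _
  have hzU : ∀ n s, s • z (x n) ∈ U ↔ s ∈ q (x n) := by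
    intro n s
    rw [← h6]
    constructor
    · intro h
      have := hcapU (n+1) _ (Submodule.smul_mem _ s (hzN n)) h
      rwa [xs] at this
    · intro h
      rw [← xs] at h
      exact (memU _).2 ⟨_, h⟩
  refine Set.infinite_of_injective_forall_mem (f := fun n => q (x n)) ?_ ?_
  · have : ∀ i j, i < j → q (x i) ≠ q (x j) := by
      intro i j hij h
      apply h7 (x j)
      rw [← h, ← hzU]
      exact (memU _).2 ⟨j, (x j).2.2.2.2 _ (mN hij (hzN i))⟩
    intro i j hij
    rcases lt_trichotomy i j with h | h | h
    · exact (this i j h hij).elim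
    · exact h
    · exact (this j i h hij.symm).elim
  · intro n
    rw [assoc_iff]
    refine ⟨h4 _, U.mkQ (z (x n)), fun r => ?_⟩
    rw [← hzU, ← map_smul, Submodule.mkQ_apply, Submodule.Quotient.mk_eq_zero]

theorem fsf [IsNoetherianRing R] {M : Type u} [AddCommGroup M] [Module R M]
    (hM : ∀ N : Submodule R M, (associatedPrimes R (M ⧸ N)).Finite) :
    ∃ N : Submodule R M, N.FG ∧ (Module.support R (M ⧸ N)).Finite := by
  by_contra! hcon
  let J : Submodule R M → Ideal R := fun N => PrimeSpectrum.vanishingIdeal (Module.support R (M ⧸ N))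
  have smono : ∀ N N' : Submodule R M, N ≤ N' →
      Module.support R (M ⧸ N') ⊆ Module.support R (M ⧸ N) := by
    intro N N' h p hp
    rw [mem_supp_quot] at hp ⊢
    obtain ⟨y, hy⟩ := hp
    exact ⟨y, fun t ht => hy t (h ht)⟩
  obtain ⟨_, ⟨N0, hN0, rfl⟩, hmax⟩ := set_has_maximal_iff_noetherian.2 (inferInstance : IsNoetherian R R)
    {I | ∃ N : Submodule R M, N.FG ∧ J N = I} ⟨_, ⊥, Submodule.fg_bot, rfl⟩
  have hinf0 : (PrimeSpectrum.zeroLocus (J N0 : Set R)).Infinite :=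
    Set.Infinite.mono (PrimeSpectrum.subset_zeroLocus_vanishingIdeal _) (hcon N0 hN0)
  obtain ⟨(P : Ideal R), ⟨hPJ, hPinf⟩, hPmax⟩ := set_has_maximal_iff_noetherian.2
    (inferInstance : IsNoetherian R R)
    {I : Ideal R | J N0 ≤ I ∧ (PrimeSpectrum.zeroLocus (I : Set R)).Infinite} ⟨_, le_rfl, hinf0⟩
  have hfin : ∀ r ∉ P, (PrimeSpectrum.zeroLocus ((P ⊔ Ideal.span {r} : Ideal R) : Set R)).Finite := by
    intro r hr
    by_contra h
    refine hPmax _ ⟨hPJ.trans le_sup_left, h⟩ (lt_of_le_of_ne le_sup_left ?_)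
    intro h'
    apply hr
    rw [h']
    exact Ideal.mem_sup_right (Ideal.mem_span_singleton_self r)
  have hPp : P.IsPrime := by
    rw [Ideal.isPrime_iff]
    constructor
    · rintro rfl
      simp at hPinf
    · intro a b hab
      by_contra! h
      apply hPinf
      refine ((hfin a h.1).union (hfin b h.2)).subset ?_
      intro p hp
      have hp' : P ≤ p.asIdeal := hp
      rcases p.2.mem_or_mem (hp' hab) with h | h
      · left
        exact sup_le hp' ((Ideal.span_singleton_le_iff_mem _).2 h)
      · right
        exact sup_le hp' ((Ideal.span_singleton_le_iff_mem _).2 h)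
  obtain ⟨U, hU⟩ := fsf_inf (M := M) P hPinf hfin (by
    intro N hN
    have h1 : J (N0 ⊔ N) = J N0 := by
      by_contra hne
      exact hmax _ ⟨N0 ⊔ N, hN0.sup hN, rfl⟩ (lt_of_le_of_ne
        (PrimeSpectrum.vanishingIdeal_anti_mono (smono _ _ le_sup_left)) (Ne.symm hne))
    have h2 : (⟨P, hPp⟩ : PrimeSpectrum R) ∈ Module.support R (M ⧸ (N0 ⊔ N)) := by
      apply supp_of_sInf (hM _)
      exact h1.le.trans hPJ
    exact (mem_supp_quot _ _).1 (smono _ _ le_sup_right h2))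
  exact hU (hM U)

end FSF
end WLC

namespace WLC

section Artin
open Pointwise
variable {R : Type u} [CommRing R] {B : Type u} [AddCommGroup B] [Module R B]

/-- Descending chain condition below a submodule. -/
def DccSub (K : Submodule R B) : Prop :=
  ∀ f : ℕ → Submodule R B, Antitone f → (∀ n, f n ≤ K) → ∃ n, ∀ m, n ≤ m → f m = f n

theorem dccSub_of_isArtinian (K : Submodule R B) [IsArtinian R K] : DccSub K := by
  intro f hf hK
  obtain ⟨n, hn⟩ := (monotone_stabilizes_iff_artinian (R := R) (M := K)).2 inferInstance
    ⟨fun n => OrderDual.toDual ((f n).comap K.subtype),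
      fun a b h => Submodule.comap_mono (hf h)⟩
  refine ⟨n, fun m hm => ?_⟩
  have h1 : (f n).comap K.subtype = (f m).comap K.subtype := hn m hm
  have h2 := congrArg (Submodule.map K.subtype) h1
  rw [Submodule.map_comap_subtype, Submodule.map_comap_subtype, inf_eq_right.2 (hK _),
    inf_eq_right.2 (hK _)] at h2
  exact h2.symm

theorem isArtinian_of_dccSub (h : DccSub (⊤ : Submodule R B)) : IsArtinian R B := by
  rw [← monotone_stabilizes_iff_artinian]
  intro f
  obtain ⟨n, hn⟩ := h (fun n => OrderDual.ofDual (f n)) (fun a b h => f.monotone h) (fun _ => le_top)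
  exact ⟨n, fun m hm => (hn m hm).symm⟩

/-- The auxiliary submodule `x^n (C ∩ 0:x^{n+1})`. -/
def lead (x : R) (C : Submodule R B) (n : ℕ) : Submodule R B :=
  x ^ n • (C ⊓ Submodule.torsionBy R B (x ^ (n+1)))

theorem mem_lead {x : R} {C : Submodule R B} {n : ℕ} {b : B} :
    b ∈ lead x C n ↔ ∃ c ∈ C, x ^ (n+1) • c = 0 ∧ x ^ n • c = b := by
  rw [lead, Submodule.mem_smul_pointwise_iff_exists]
  constructor
  · rintro ⟨c, hc, rfl⟩
    exact ⟨c, hc.1, (Submodule.mem_torsionBy_iff _ _).1 hc.2, rfl⟩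
  · rintro ⟨c, hc, h, rfl⟩
    exact ⟨c, ⟨hc, (Submodule.mem_torsionBy_iff _ _).2 h⟩, rfl⟩

theorem lead_anti {x : R} {C C' : Submodule R B} (h : C' ≤ C) {n m : ℕ} (hnm : n ≤ m) :
    lead x C' m ≤ lead x C n := by
  intro b hb
  obtain ⟨c, hc, h1, rfl⟩ := mem_lead.1 hb
  obtain ⟨k, rfl⟩ := Nat.exists_eq_add_of_le hnm
  refine mem_lead.2 ⟨x ^ k • c, h (C'.smul_mem _ hc), ?_, ?_⟩
  · rw [smul_smul, ← h1]
    congr 1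
    ring
  · rw [smul_smul]
    congr 1
    ring

theorem le_of_lead {x : R} {C C' : Submodule R B} (h : C' ≤ C) (hn : ∀ n, lead x C n ≤ lead x C' n)
    (hnil : ∀ b ∈ C, ∃ n : ℕ, x ^ n • b = 0) : C ≤ C' := by
  have : ∀ k : ℕ, ∀ c ∈ C, x ^ k • c = 0 → c ∈ C' := by
    intro k
    induction k with
    | zero =>
      intro c _ h
      have : c = 0 := by simpa using h
      rw [this]
      exact C'.zero_mem
    | succ k ih =>
      intro c hc h0
      obtain ⟨c', hc', h1, h2⟩ := mem_lead.1 (hn k (mem_lead.2 ⟨c, hc, h0, rfl⟩))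
      have := ih (c - c') (C.sub_mem hc (h hc')) (by rw [smul_sub, h2, sub_self])
      simpa using C'.add_mem this hc'
  intro c hc
  obtain ⟨n, h⟩ := hnil c hc
  exact this n c hc h

theorem dcc_single (x : R) (K : Submodule R B) (hnil : ∀ b ∈ K, ∃ n : ℕ, x ^ n • b = 0)
    (h : DccSub (K ⊓ Submodule.torsionBy R B x)) : DccSub K := by
  intro f hf hK
  have hle : ∀ m n, lead x (f m) n ≤ K ⊓ Submodule.torsionBy R B x := by
    intro m n b hb
    obtain ⟨c, hc, h1, rfl⟩ := mem_lead.1 hb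
    refine ⟨K.smul_mem _ (hK m hc), (Submodule.mem_torsionBy_iff _ _).2 ?_⟩
    rw [smul_smul, ← h1]
    congr 1
    ring
  obtain ⟨m0, hm0⟩ := h (fun m => lead x (f m) m) (fun a b hab => lead_anti (hf hab) hab)
    (fun m => hle m m)
  have h1 : ∀ n, ∃ a, ∀ m, a ≤ m → lead x (f m) n = lead x (f a) n := fun n =>
    h (fun m => lead x (f m) n) (fun a b hab => lead_anti (hf hab) le_rfl) (fun m => hle m n)
  choose a ha using h1
  let M := max m0 ((Finset.range m0).sup a)
  have hM : ∀ n < m0, a n ≤ M := fun n hn =>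
    (Finset.le_sup (f := a) (Finset.mem_range.2 hn)).trans (le_max_right _ _)
  refine ⟨M, fun m hm => le_antisymm (hf hm) ?_⟩
  refine le_of_lead (x := x) (hf hm) (fun n => ?_) (fun b hb => hnil b (hK _ hb))
  rcases lt_or_ge n m0 with hn | hn
  · rw [ha n M (hM n hn), ha n m ((hM n hn).trans hm)]
  · have e1 : lead x (f M) n ≤ lead x (f m0) m0 := lead_anti (hf (le_max_left _ _)) hn
    have e2 := hm0 (max m n) (hn.trans (le_max_right _ _))
    have e3 : lead x (f (max m n)) (max m n) ≤ lead x (f m) n :=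
      lead_anti (hf (le_max_left _ _)) (le_max_right _ _)
    rw [e2] at e3
    exact e1.trans e3

theorem dcc_finset [DecidableEq R] (s : Finset R) : ∀ (K : Submodule R B), (∀ x ∈ s, ∀ b ∈ K, ∃ n : ℕ, x ^ n • b = 0) →
    DccSub (K ⊓ Submodule.torsionBySet R B (s : Set R)) → DccSub K := by
  induction s using Finset.induction_on with
  | empty =>
    intro K _ h
    have : Submodule.torsionBySet R B ((∅ : Finset R) : Set R) = ⊤ := by
      ext b
      simp [Submodule.mem_torsionBySet_iff]
    rwa [this, inf_top_eq] at h
  | insert x s hx ih =>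
    intro K hK h
    apply dcc_single x K (hK x (Finset.mem_insert_self _ _))
    apply ih
    · intro y hy b hb
      exact hK y (Finset.mem_insert_of_mem hy) b hb.1
    · convert h using 1
      ext b
      simp [Submodule.mem_torsionBySet_iff, Submodule.mem_torsionBy_iff, and_assoc]

theorem artin_of_soc [DecidableEq R] (s : Finset R) (h1 : ∀ x ∈ s, ∀ b : B, ∃ n : ℕ, x ^ n • b = 0)
    (h2 : IsArtinian R (Submodule.torsionBySet R B (s : Set R))) : IsArtinian R B := by
  apply isArtinian_of_dccSub
  apply dcc_finset s _ (fun x hx b _ => h1 x hx b)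
  rw [top_inf_eq]
  exact dccSub_of_isArtinian _

theorem split_finset [DecidableEq R] [IsArtinian R B] (s : Finset R) : ∀ K : Submodule R B, ∃ N : ℕ, ∀ b ∈ K,
    ∃ c ∈ Ideal.span (s : Set R) • (⊤ : Submodule R B), ∃ d ∈ K, (∀ x ∈ s, x ^ N • d = 0) ∧ b = c + d := by
  induction s using Finset.induction_on with
  | empty =>
    intro K
    exact ⟨0, fun b hb => ⟨0, Submodule.zero_mem _, b, hb, by simp, by simp⟩⟩
  | insert x s hx ih =>
    intro K
    obtain ⟨k, hk⟩ := (dccSub_of_isArtinian (⊤ : Submodule R B)) (fun n => x ^ n • K) (by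
      apply antitone_nat_of_succ_le
      intro n b hb
      obtain ⟨c, hc, rfl⟩ := (Submodule.mem_smul_pointwise_iff_exists _ _ _).1 hb
      rw [pow_succ, mul_smul]
      exact Submodule.smul_mem_pointwise_smul _ _ _ (K.smul_mem _ hc)) (fun _ => le_top)
    obtain ⟨N, hN⟩ := ih (K ⊓ Submodule.torsionBy R B (x ^ k))
    refine ⟨max N k, fun b hb => ?_⟩
    have h1 : x ^ k • b ∈ x ^ (k+1) • K := by
      have := hk (k+1) (Nat.le_succ _)
      rw [this]
      exact Submodule.smul_mem_pointwise_smul _ _ _ hb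
    obtain ⟨b', hb', h2⟩ := (Submodule.mem_smul_pointwise_iff_exists _ _ _).1 h1
    obtain ⟨c, hc, d, hd, h3, h4⟩ := hN (b - x • b') ⟨K.sub_mem hb (K.smul_mem _ hb'), by
      rw [SetLike.mem_coe, Submodule.mem_torsionBy_iff, smul_sub, smul_smul, ← pow_succ, h2, sub_self]⟩
    refine ⟨x • b' + c, ?_, d, hd.1, ?_, ?_⟩
    · refine Submodule.add_mem _ (Submodule.smul_mem_smul (Ideal.subset_span ?_) trivial) ?_
      · simp
      · exact Submodule.smul_mono_left (Ideal.span_mono (by simp)) hc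
    · intro y hy
      rcases Finset.mem_insert.1 hy with rfl | hy
      · obtain ⟨e, he⟩ := Nat.exists_eq_add_of_le (le_max_right N k)
        rw [he, pow_add, mul_comm, mul_smul, (Submodule.mem_torsionBy_iff _ _).1 hd.2, smul_zero]
      · obtain ⟨e, he⟩ := Nat.exists_eq_add_of_le (le_max_left N k)
        rw [he, pow_add, mul_comm, mul_smul, h3 y hy, smul_zero]
    · rw [add_assoc, ← h4]
      abel

theorem fg_of_le' [IsNoetherianRing R] {N K : Submodule R B} (hK : K.FG) (h : N ≤ K) : N.FG := by
  exact hK.of_le h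

theorem tors_pow_fg [IsNoetherianRing R] (I : Ideal R)
    (h : (Submodule.torsionBySet R B (I : Set R)).FG) (n : ℕ) :
    (Submodule.torsionBySet R B ((I ^ n : Ideal R) : Set R)).FG := by
  induction n with
  | zero =>
    have : Submodule.torsionBySet R B ((I ^ 0 : Ideal R) : Set R) = ⊥ := by
      ext b
      rw [Submodule.mem_torsionBySet_iff, Submodule.mem_bot]
      constructor
      · intro h
        simpa using h ⟨1, by simp⟩
      · rintro rfl
        simp
    rw [this]
    exact Submodule.fg_bot
  | succ n ih =>
    obtain ⟨s, hs⟩ := (isNoetherianRing_iff_ideal_fg R).1 inferInstance I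
    let f : B →ₗ[R] (s → B) := LinearMap.pi fun x => LinearMap.lsmul R B x.1
    apply Submodule.fg_of_fg_map_of_fg_inf_ker f
    · refine fg_of_le' (K := Submodule.pi Set.univ
        fun _ => Submodule.torsionBySet R B ((I ^ n : Ideal R) : Set R)) ?_ ?_
      · exact Submodule.fg_pi fun _ => ih
      · rintro _ ⟨b, hb, rfl⟩ ⟨x, hx⟩ -
        change x • b ∈ Submodule.torsionBySet R B ((I ^ n : Ideal R) : Set R)
        rw [Submodule.mem_torsionBySet_iff]
        rintro ⟨a, ha⟩
        rw [SetLike.mem_coe, Submodule.mem_torsionBySet_iff] at hb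
        have := hb ⟨a * x, by
          rw [SetLike.mem_coe, pow_succ]
          exact Ideal.mul_mem_mul ha (hs.le (Ideal.subset_span hx))⟩
        simpa [mul_smul] using this
    · refine fg_of_le' h ?_
      rintro b ⟨-, hb⟩
      rw [Submodule.mem_torsionBySet_iff]
      rintro ⟨a, ha⟩
      change a • b = 0
      rw [← hs] at ha
      refine Submodule.span_induction (p := fun a _ => a • b = 0) ?_ (by simp) ?_ ?_ ha
      · intro x hx
        exact congrFun hb ⟨x, hx⟩
      · intro x y _ _ hx hy
        rw [add_smul, hx, hy, add_zero]
      · intro r x _ hx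
        rw [smul_eq_mul, mul_smul, hx, smul_zero]

theorem exists_fg_add [IsNoetherianRing R] [IsArtinian R B] (I : Ideal R)
    (h : (Submodule.torsionBySet R B (I : Set R)).FG) (k : ℕ) :
    ∃ F : Submodule R B, F.FG ∧ F ⊔ I ^ k • (⊤ : Submodule R B) = ⊤ := by
  classical
  obtain ⟨s, hs⟩ := (isNoetherianRing_iff_ideal_fg R).1 inferInstance I
  obtain ⟨N, hN⟩ := split_finset (B := B) s ⊤
  let J : Ideal R := Ideal.span ((fun x => x ^ N) '' (s : Set R))
  have hIJ : I ≤ J.radical := by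
    rw [← hs]
    refine Ideal.span_le.2 fun x hx => ?_
    exact ⟨N, Ideal.subset_span ⟨x, hx, rfl⟩⟩
  obtain ⟨m, hm⟩ := Ideal.exists_pow_le_of_le_radical_of_fg hIJ ⟨s, hs⟩
  let F := Submodule.torsionBySet R B ((I ^ m : Ideal R) : Set R)
  refine ⟨F, tors_pow_fg I h m, ?_⟩
  have h1 : F ⊔ I • (⊤ : Submodule R B) = ⊤ := by
    rw [eq_top_iff]
    intro b _
    obtain ⟨c, hc, d, -, hd, rfl⟩ := hN b trivial
    rw [hs] at hc
    rw [add_comm]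
    refine Submodule.add_mem_sup ?_ hc
    rw [Submodule.mem_torsionBySet_iff]
    rintro ⟨a, ha⟩
    change a • d = 0
    refine Submodule.span_induction (p := fun a _ => a • d = 0) ?_ (by simp) ?_ ?_ (hm ha)
    · rintro _ ⟨x, hx, rfl⟩
      exact hd x hx
    · intro x y _ _ hx hy
      rw [add_smul, hx, hy, add_zero]
    · intro r x _ hx
      rw [smul_eq_mul, mul_smul, hx, smul_zero]
  induction k with
  | zero => simp
  | succ k ih =>
    rw [eq_top_iff]
    nth_rw 1 [← h1]
    refine sup_le le_sup_left ?_
    have e : I • (⊤ : Submodule R B) = I • F ⊔ I ^ (k+1) • ⊤ := by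
      nth_rw 1 [← ih]
      rw [Submodule.smul_sup, pow_succ', mul_smul]
    rw [e]
    exact sup_le_sup Submodule.smul_le_right le_rfl

theorem smul_le_self (x : R) (D : Submodule R B) : x • D ≤ D := by
  intro b hb
  obtain ⟨c, hc, rfl⟩ := (Submodule.mem_smul_pointwise_iff_exists _ _ _).1 hb
  exact D.smul_mem _ hc

theorem generic_primes [IsNoetherianRing R] [IsArtinian R B] (I : Ideal R) :
    ∀ D : Submodule R B, I • D = D → ∃ Q : Set (Ideal R), Q.Finite ∧ (∀ q ∈ Q, q.IsPrime ∧ ¬ I ≤ q) ∧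
      ∀ x, (∀ q ∈ Q, x ∉ q) → x • D = D := by
  intro D
  induction D using IsWellFounded.induction (· < · : Submodule R B → Submodule R B → Prop) with
  | ind D ih =>
  intro hD
  by_cases h0 : D = ⊥
  · exact ⟨∅, Set.finite_empty, by simp, fun x _ => by simp [h0]⟩
  by_cases hollow : ∀ D1 D2, D1 ≤ D → D2 ≤ D → D1 ⊔ D2 = D → D1 = D ∨ D2 = D
  · let q : Ideal R :=
      { carrier := {r | r • D ≠ D}
        add_mem' := by
          intro a b ha hb hab
          have : a • D ⊔ b • D = D := by
            apply le_antisymm (sup_le (smul_le_self _ _) (smul_le_self _ _))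
            nth_rw 1 [← hab]
            intro y hy
            obtain ⟨c, hc, rfl⟩ := (Submodule.mem_smul_pointwise_iff_exists _ _ _).1 hy
            rw [add_smul]
            exact Submodule.add_mem_sup (Submodule.smul_mem_pointwise_smul _ _ _ hc)
              (Submodule.smul_mem_pointwise_smul _ _ _ hc)
          rcases hollow _ _ (smul_le_self _ _) (smul_le_self _ _) this with h | h
          · exact ha h
          · exact hb h
        zero_mem' := by
          intro h
          apply h0
          rw [← h]
          simp
        smul_mem' := by
          intro c x hx h
          apply hx
          apply le_antisymm (smul_le_self _ _)
          nth_rw 1 [← h]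
          intro y hy
          obtain ⟨d, hd, rfl⟩ := (Submodule.mem_smul_pointwise_iff_exists _ _ _).1 hy
          rw [smul_eq_mul, mul_comm, mul_smul]
          exact Submodule.smul_mem_pointwise_smul _ _ _ (D.smul_mem _ hd) }
    have hq : ∀ r, r ∈ q ↔ r • D ≠ D := fun r => Iff.rfl
    clear_value q
    refine ⟨{q}, Set.finite_singleton q, ?_, ?_⟩
    · intro q' hq'
      rw [Set.mem_singleton_iff.1 hq']
      constructor
      · rw [Ideal.isPrime_iff]
        constructor
        · intro h
          have : (1 : R) ∈ q := h ▸ trivial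
          exact (hq _).1 this (one_smul _ _)
        · intro a b hab
          by_contra! hc
          rw [hq, hq, not_not, not_not] at hc
          apply (hq _).1 hab
          rw [mul_smul, hc.2, hc.1]
      · intro hI
        obtain ⟨s, hs⟩ := (isNoetherianRing_iff_ideal_fg R).1 inferInstance I
        have key : ∀ t : Finset R, (∀ x ∈ t, x ∈ q) → t.sup (fun x => x • D) ≠ D := by
          classical
          intro t
          induction t using Finset.induction_on with
          | empty => intro _ h; exact h0 (by simpa using h.symm)
          | insert x t _ ih =>
            intro hx h
            rw [Finset.sup_insert] at h
            rcases hollow _ _ (le_sup_left.trans h.le) (le_sup_right.trans h.le) h with h | h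
            · exact (hq _).1 (hx x (Finset.mem_insert_self _ _)) h
            · exact ih (fun y hy => hx y (Finset.mem_insert_of_mem hy)) h
        apply key s fun x hx => hI (hs.le (Ideal.subset_span hx))
        apply le_antisymm (Finset.sup_le fun x _ => smul_le_self _ _)
        nth_rw 1 [← hD]
        rw [Submodule.smul_le]
        intro r hr n hn
        rw [← hs] at hr
        refine Submodule.span_induction (p := fun a _ => a • n ∈ s.sup (fun x => x • D)) ?_ (by simp) ?_ ?_ hr
        · intro x hx
          exact (Finset.le_sup (f := fun x => x • D) hx : x • D ≤ _)
            (Submodule.smul_mem_pointwise_smul _ _ _ hn)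
        · intro x y _ _ hx hy
          rw [add_smul]
          exact Submodule.add_mem _ hx hy
        · intro r x _ hx
          rw [smul_eq_mul, mul_smul]
          exact Submodule.smul_mem _ _ hx
    · intro x hx
      have := hx q rfl
      rw [hq, not_not] at this
      exact this
  · push Not at hollow
    obtain ⟨D1, D2, h1, h2, h12, hn1, hn2⟩ := hollow
    have stab : ∀ E : Submodule R B, ∃ k, I ^ (k+1) • E = I ^ k • E ∧ ∀ m, k ≤ m → I ^ m • E = I ^ k • E := by
      intro E
      obtain ⟨k, hk⟩ := (dccSub_of_isArtinian (⊤ : Submodule R B)) (fun n => I ^ n • E)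
        (fun a b hab => Submodule.smul_mono_left (Ideal.pow_le_pow_right hab)) (fun _ => le_top)
      exact ⟨k, hk _ (Nat.le_succ k), hk⟩
    have sub : ∀ E ≤ D, E ≠ D → ∃ E' : Submodule R B, (∃ k, ∀ m, k ≤ m → I ^ m • E = E') ∧ E' ≤ D ∧ ∃ Q : Set (Ideal R), Q.Finite ∧ (∀ q ∈ Q, q.IsPrime ∧ ¬ I ≤ q) ∧
      ∀ x, (∀ q ∈ Q, x ∉ q) → x • E' = E' := by
      intro E hE hne
      obtain ⟨k, hk, hk'⟩ := stab E
      have hle : I ^ k • E ≤ E := Submodule.smul_le_right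
      exact ⟨I ^ k • E, ⟨k, hk'⟩, hle.trans hE, ih _ (lt_of_le_of_lt hle (lt_of_le_of_ne hE hne)) (by
        rw [← mul_smul, ← pow_succ', hk])⟩
    obtain ⟨E1, ⟨k1, hk1⟩, hE1, Q1, f1, p1, g1⟩ := sub D1 h1 hn1
    obtain ⟨E2, ⟨k2, hk2⟩, hE2, Q2, f2, p2, g2⟩ := sub D2 h2 hn2
    have hE : E1 ⊔ E2 = D := by
      rw [← hk1 (max k1 k2) (le_max_left _ _), ← hk2 (max k1 k2) (le_max_right _ _),
        ← Submodule.smul_sup, h12]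
      have : ∀ n, I ^ n • D = D := by
        intro n
        induction n with
        | zero => simp
        | succ n ih => rw [pow_succ, mul_smul, hD, ih]
      exact this _
    refine ⟨Q1 ∪ Q2, f1.union f2, ?_, ?_⟩
    · rintro q (h | h)
      · exact p1 q h
      · exact p2 q h
    · intro x hx
      apply le_antisymm (smul_le_self _ _)
      nth_rw 1 [← hE]
      refine sup_le ?_ ?_
      · rw [← g1 x fun q hq => hx q (Or.inl hq)]
        exact Submodule.map_mono hE1
      · rw [← g2 x fun q hq => hx q (Or.inr hq)]
        exact Submodule.map_mono hE2

theorem artin_generic [IsNoetherianRing R] [IsArtinian R B] (I : Ideal R)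
    (h : (Submodule.torsionBySet R B (I : Set R)).FG) :
    ∃ Q : Set (Ideal R), Q.Finite ∧ (∀ q ∈ Q, q.IsPrime ∧ ¬ I ≤ q) ∧
      ∀ x, (∀ q ∈ Q, x ∉ q) → ∃ F : Submodule R B, F.FG ∧ F ⊔ x • (⊤ : Submodule R B) = ⊤ := by
  obtain ⟨k, hk⟩ := (dccSub_of_isArtinian (⊤ : Submodule R B)) (fun n => I ^ n • ⊤)
        (fun a b hab => Submodule.smul_mono_left (Ideal.pow_le_pow_right hab)) (fun _ => le_top)
  have hk' := hk (k+1) (Nat.le_succ k)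
  obtain ⟨Q, h1, h2, h3⟩ := generic_primes I (I ^ k • (⊤ : Submodule R B)) (by
    rw [← mul_smul, ← pow_succ', hk'])
  obtain ⟨F, hF, hF'⟩ := exists_fg_add I h k
  refine ⟨Q, h1, h2, fun x hx => ⟨F, hF, ?_⟩⟩
  rw [eq_top_iff]
  refine hF'.ge.trans (sup_le le_sup_left (le_trans ?_ le_sup_right))
  rw [← h3 x hx]
  exact Submodule.map_mono le_top

end Artin
end WLC

namespace WLC

section Generic
open Pointwise
variable {R : Type u} [CommRing R]

/-- `𝔞`-torsion modules. -/
def IsTors (𝔞 : Ideal R) (A : Type u) [AddCommGroup A] [Module R A] : Prop :=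
  ∀ a : A, ∃ n : ℕ, ∀ x ∈ 𝔞 ^ n, x • a = 0

theorem IsTors.supp {𝔞 : Ideal R} {A : Type u} [AddCommGroup A] [Module R A] (h : IsTors 𝔞 A)
    {p : PrimeSpectrum R} (hp : p ∈ Module.support R A) : 𝔞 ≤ p.asIdeal := by
  obtain ⟨a, ha⟩ := Module.mem_support_iff'.1 hp
  obtain ⟨n, hn⟩ := h a
  refine p.2.le_of_pow_le (n := n) fun x hx => ?_
  by_contra hc
  exact ha x hc (hn x hx)

theorem artin_of_killed {R : Type u} [CommRing R] (m : Ideal R) [hm : m.IsMaximal] (B : Type u)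
    [AddCommGroup B] [Module R B] [Module.Finite R B] (h : ∀ x ∈ m, ∀ b : B, x • b = 0) :
    IsArtinian R B := by
  have ht : Module.IsTorsionBySet R B (m : Set R) := fun b x => h x.1 x.2 b
  letI : Module (R ⧸ m) B := ht.module
  haveI : IsScalarTower R (R ⧸ m) B := ht.isScalarTower
  letI : Field (R ⧸ m) := Ideal.Quotient.field m
  haveI : Module.Finite (R ⧸ m) B := Module.Finite.of_restrictScalars_finite R (R ⧸ m) B
  have h1 : IsArtinian (R ⧸ m) B := inferInstance
  rw [← monotone_stabilizes_iff_artinian] at h1 ⊢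
  intro f
  let g : Submodule R B → Submodule (R ⧸ m) B := fun N =>
    { N with
      smul_mem' := by
        intro c x hx
        obtain ⟨c, rfl⟩ := Ideal.Quotient.mk_surjective c
        exact N.smul_mem c hx }
  obtain ⟨n, hn⟩ := h1 ⟨fun n => OrderDual.toDual (g (OrderDual.ofDual (f n))), fun a b hab => by
    have := f.monotone hab
    exact fun x hx => this hx⟩
  refine ⟨n, fun k hk => ?_⟩
  have h2 : g (OrderDual.ofDual (f n)) = g (OrderDual.ofDual (f k)) := hn k hk
  have h3 : ∀ x, x ∈ g (OrderDual.ofDual (f n)) ↔ x ∈ g (OrderDual.ofDual (f k)) := by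
    intro x; rw [h2]
  exact Submodule.ext h3

theorem generic_at [IsNoetherianRing R] (𝔞 : Ideal R) (A : Type u) [AddCommGroup A] [Module R A]
    (hA : IsTors 𝔞 A) (hfg : (Submodule.torsionBySet R A (𝔞 : Set R)).FG) (p : PrimeSpectrum R)
    (hmin : ∀ q ∈ Module.support R A, q.asIdeal ≤ p.asIdeal → p.asIdeal ≤ q.asIdeal) :
    ∃ Q : Set (Ideal R), Q.Finite ∧ (∀ q ∈ Q, q.IsPrime ∧ ¬ 𝔞 ≤ q) ∧
      ∀ x, (∀ q ∈ Q, x ∉ q) → ∃ N : Submodule R A, N.FG ∧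
        p ∉ Module.support R (A ⧸ (N ⊔ x • (⊤ : Submodule R A))) := by
  classical
  by_cases hap : 𝔞 ≤ p.asIdeal
  swap
  · refine ⟨∅, Set.finite_empty, by simp, fun x _ => ⟨⊥, Submodule.fg_bot, fun h => hap ?_⟩⟩
    apply hA.supp
    exact Module.support_subset_of_surjective (Submodule.mkQ _) (Submodule.mkQ_surjective _) h
  let S := p.asIdeal.primeCompl
  let R' := Localization.AtPrime p.asIdeal
  let B := LocalizedModule S A
  let f : A →ₗ[R] B := LocalizedModule.mkLinearMap S A
  haveI : IsNoetherianRing R' := IsLocalization.isNoetherianRing S R' inferInstance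
  have hunit : ∀ s : S, IsUnit (algebraMap R R' s) := fun s => IsLocalization.map_units R' s
  have hsurj : ∀ b : B, ∃ (s : S) (a : A), s.1 • b = f a := by
    intro b
    obtain ⟨⟨a, s⟩, h⟩ := IsLocalizedModule.surj S f b
    exact ⟨s, a, h⟩
  have hz : ∀ a : A, f a = 0 ↔ ∃ s : S, s.1 • a = 0 := fun a =>
    (IsLocalizedModule.eq_zero_iff S f)
  have hsm : ∀ (r : R) (b : B), algebraMap R R' r • b = r • b := fun r b => algebraMap_smul R' r b
  have hmemS : ∀ (N : Submodule R' B) (s : S) (b : B), s.1 • b ∈ N → b ∈ N := by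
    intro N s b h
    rw [← hsm] at h
    exact (Submodule.smul_mem_iff_of_isUnit N (hunit s)).1 h
  have hcan : ∀ (s : S) (b : B), s.1 • b = 0 → b = 0 := fun s b h => by
    have := hmemS ⊥ s b (by simpa using h)
    simpa using this
  -- local nilpotence
  have hnil : ∀ y ∈ p.asIdeal, ∀ b : B, ∃ n : ℕ, y ^ n • b = 0 := by
    intro y hy b
    obtain ⟨s, a, hb⟩ := hsurj b
    by_contra! hcon
    let T : Submonoid R := S ⊔ Submonoid.powers y
    have hdis : Disjoint ((Ideal.torsionOf R A a : Ideal R) : Set R) (T : Set R) := by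
      rw [Set.disjoint_left]
      intro t ht1 ht2
      obtain ⟨u, hu, _, ⟨n, rfl⟩, rfl⟩ := Submonoid.mem_sup.1 ht2
      have ht1 : (u * y ^ n) • a = 0 := ht1
      apply hcon n
      apply hcan s
      rw [smul_comm, hb, ← map_smul, hz]
      exact ⟨⟨u, hu⟩, by rw [← mul_smul]; exact ht1⟩
    obtain ⟨q, hq, hle, hd⟩ := Ideal.exists_le_prime_disjoint _ T hdis
    have hqp : q ≤ p.asIdeal := by
      intro r hr
      by_contra hc
      exact Set.disjoint_left.1 hd hr (Submonoid.mem_sup_left (S := S) hc)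
    have := hmin ⟨q, hq⟩ (by
      rw [Module.mem_support_iff']
      exact ⟨a, fun r hr h => hr (hle h)⟩) hqp hy
    exact Set.disjoint_left.1 hd this (Submonoid.mem_sup_right (T := Submonoid.powers y) ⟨1, pow_one y⟩)
  -- the `𝔞`-socle
  let I : Ideal R' := 𝔞.map (algebraMap R R')
  have hI : (Submodule.torsionBySet R' B (I : Set R')).FG := by
    obtain ⟨t, ht⟩ := hfg
    refine fg_of_le' (K := Submodule.span R' (f '' (t : Set A))) ⟨t.image f, by simp⟩ ?_
    intro b hb
    rw [Submodule.mem_torsionBySet_iff] at hb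
    obtain ⟨s, a, h⟩ := hsurj b
    have hx : ∀ x ∈ 𝔞, ∃ u : S, u.1 • x • a = 0 := by
      intro x hx
      rw [← hz, map_smul, ← h, smul_comm, ← hsm x]
      have := hb ⟨algebraMap R R' x, Ideal.mem_map_of_mem _ hx⟩
      change algebraMap R R' x • b = 0 at this
      rw [this, smul_zero]
    obtain ⟨g, hg⟩ := (isNoetherianRing_iff_ideal_fg R).1 inferInstance 𝔞
    have hx' : ∀ x : g, ∃ u : S, u.1 • x.1 • a = 0 := fun x =>
      hx x.1 (hg.le (Ideal.subset_span x.2))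
    choose u hu using hx'
    let v : S := ∏ x, u x
    have hv : ∀ x : g, v.1 • x.1 • a = 0 := by
      intro x
      obtain ⟨w, hw⟩ := Finset.dvd_prod_of_mem u (Finset.mem_univ x)
      change (∏ x, u x).1 • _ = _
      rw [hw, mul_comm, Submonoid.coe_mul, mul_smul, hu, smul_zero]
    have hva : v.1 • a ∈ Submodule.torsionBySet R A (𝔞 : Set R) := by
      rw [← hg, ← Submodule.torsionBySet_eq_torsionBySet_span, Submodule.mem_torsionBySet_iff]
      intro x
      rw [smul_comm]
      exact hv x
    apply hmemS _ s
    rw [h]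
    apply hmemS _ v
    rw [← map_smul]
    rw [← ht] at hva
    have : f (v.1 • a) ∈ Submodule.map f (Submodule.span R (t : Set A)) := ⟨_, hva, rfl⟩
    rw [Submodule.map_span] at this
    exact Submodule.span_subset_span R R' _ this
  haveI : IsArtinian R' B := by
    obtain ⟨g, hg⟩ := (isNoetherianRing_iff_ideal_fg R).1 inferInstance p.asIdeal
    apply artin_of_soc (g.image (algebraMap R R'))
    · intro x hx b
      obtain ⟨y, hy, rfl⟩ := Finset.mem_image.1 hx
      obtain ⟨n, hn⟩ := hnil y (hg.le (Ideal.subset_span hy)) b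
      exact ⟨n, by rw [← map_pow, hsm, hn]⟩
    · have hspan : Ideal.span ((g.image (algebraMap R R') : Finset R') : Set R') =
          IsLocalRing.maximalIdeal R' := by
        rw [Finset.coe_image, ← Ideal.map_span]
        have : Ideal.span (g : Set R) = p.asIdeal := hg
        rw [this]
        exact Localization.AtPrime.map_eq_maximalIdeal
      rw [Submodule.torsionBySet_eq_torsionBySet_span, hspan]
      haveI : Module.Finite R' (Submodule.torsionBySet R' B
          ((IsLocalRing.maximalIdeal R' : Ideal R') : Set R')) := by
        rw [Module.Finite.iff_fg]
        refine fg_of_le' hI ?_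
        apply Submodule.torsionBySet_le_torsionBySet_of_subset
        rw [← Localization.AtPrime.map_eq_maximalIdeal]
        exact Ideal.map_mono hap
      apply artin_of_killed (IsLocalRing.maximalIdeal R')
      rintro x hx ⟨b, hb⟩
      rw [Submodule.mem_torsionBySet_iff] at hb
      exact Subtype.ext (hb ⟨x, hx⟩)
  obtain ⟨Q, hQ1, hQ2, hQ3⟩ := artin_generic I hI
  refine ⟨(fun q => q.comap (algebraMap R R')) '' Q, hQ1.image _, ?_, ?_⟩
  · rintro _ ⟨q, hq, rfl⟩
    haveI := (hQ2 q hq).1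
    refine ⟨Ideal.comap_isPrime _ _, fun h => (hQ2 q hq).2 ?_⟩
    exact Ideal.map_le_iff_le_comap.2 h
  · intro x hx
    obtain ⟨F, hF, hFx⟩ := hQ3 (algebraMap R R' x) (fun q hq h => hx _ ⟨q, hq, rfl⟩ h)
    obtain ⟨t, ht⟩ := hF
    choose s a hsa using hsurj
    let N : Submodule R A := Submodule.span R (a '' (t : Set B))
    refine ⟨N, ⟨t.image a, by simp [N]⟩, ?_⟩
    have hloc : Submodule.span R' (f '' ((N ⊔ x • (⊤ : Submodule R A) : Submodule R A) : Set A)) = ⊤ := by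
      rw [eq_top_iff, ← hFx]
      refine sup_le ?_ ?_
      · rw [← ht, Submodule.span_le]
        intro b hb
        apply hmemS _ (s b)
        rw [hsa]
        exact Submodule.subset_span ⟨_, Submodule.mem_sup_left (Submodule.subset_span ⟨b, hb, rfl⟩), rfl⟩
      · intro b hb
        obtain ⟨c, -, rfl⟩ := (Submodule.mem_smul_pointwise_iff_exists _ _ _).1 hb
        apply hmemS _ (s c)
        rw [smul_comm, hsa, hsm, ← map_smul]
        exact Submodule.subset_span ⟨_, Submodule.mem_sup_right
          (Submodule.smul_mem_pointwise_smul _ _ _ trivial), rfl⟩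
    rw [mem_supp_quot]
    rintro ⟨y, hy⟩
    have hyl : f y ∈ Submodule.localized' R' S f (N ⊔ x • (⊤ : Submodule R A)) := by
      rw [Submodule.localized'_eq_span, hloc]
      trivial
    obtain ⟨m, hm, s', hs'⟩ := (Submodule.mem_localized' _ _ _ _ _).1 hyl
    rw [IsLocalizedModule.mk'_eq_iff] at hs'
    have h0 : f (m - s'.1 • y) = 0 := by
      rw [map_sub, map_smul, hs']
      exact sub_self _
    obtain ⟨w, hw⟩ := (hz _).1 h0
    rw [smul_sub, sub_eq_zero, smul_smul] at hw
    have := hy (w.1 * s'.1) (by rw [← hw]; exact Submodule.smul_mem _ _ hm)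
    exact (w * s').2 this

end Generic
end WLC

namespace WLC

section ExtKit
variable {R : Type u} [CommRing R]

/-- Finite generation of a new-style Ext module. -/
def EFin (X : ModuleCat.{u} R) (A : Type u) [AddCommGroup A] [Module R A] (j : ℕ) : Prop :=
  Module.Finite R (Abelian.Ext X (ModuleCat.of R A) j)

theorem fin_mid [IsNoetherianRing R] {U V W : Type*} [AddCommGroup U] [AddCommGroup V]
    [AddCommGroup W] [Module R U] [Module R V] [Module R W] (f : U →ₗ[R] V) (g : V →ₗ[R] W)
    [Module.Finite R U] (P : Submodule R W) [Module.Finite R P] (hP : ∀ v, g v ∈ P)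
    (h : ∀ v, g v = 0 → ∃ u, f u = v) : Module.Finite R V := by
  rw [Module.Finite.iff_fg (N := P)] at *
  rw [Module.finite_def]
  apply Submodule.fg_of_fg_map_of_fg_inf_ker g
  · refine Submodule.FG.of_le (by assumption) ?_
    rintro _ ⟨v, -, rfl⟩
    exact hP v
  · have : (LinearMap.range f).FG := by
      rw [← Module.Finite.iff_fg]
      infer_instance
    refine this.of_le ?_
    rintro v ⟨-, hv⟩
    exact h v hv

theorem fin_mid' [IsNoetherianRing R] {U V W : Type*} [AddCommGroup U] [AddCommGroup V]
    [AddCommGroup W] [Module R U] [Module R V] [Module R W] (f : U →ₗ[R] V) (g : V →ₗ[R] W)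
    (_ : Module.Finite R U) (_ : Module.Finite R W)
    (h : ∀ v, g v = 0 → ∃ u, f u = v) : Module.Finite R V :=
  fin_mid f g ⊤ (fun _ => trivial) h

section ses
variable {A B C : Type u} [AddCommGroup A] [AddCommGroup B] [AddCommGroup C]
  [Module R A] [Module R B] [Module R C]

/-- The short exact sequence of linear maps, bundled. -/
structure Ses (f : A →ₗ[R] B) (g : B →ₗ[R] C) : Prop where
  inj : Function.Injective f
  exact : Function.Exact f g
  surj : Function.Surjective g

/-- The short complex. -/
abbrev Ses.S {f : A →ₗ[R] B} {g : B →ₗ[R] C} (h : Ses f g) : ShortComplex (ModuleCat.{u} R) :=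
  ModuleCat.shortComplexOfCompEqZero f g h.exact.linearMap_comp_eq_zero

theorem Ses.se {f : A →ₗ[R] B} {g : B →ₗ[R] C} (h : Ses f g) : h.S.ShortExact :=
  ModuleCat.shortComplex_shortExact _ h.exact h.inj h.surj

variable {f : A →ₗ[R] B} {g : B →ₗ[R] C} (X : ModuleCat.{u} R)

theorem Ses.e1 [IsNoetherianRing R] (h : Ses f g) {j : ℕ} (hA : EFin X A j) (hC : EFin X C j) :
    EFin X B j :=
  fin_mid' ((Abelian.Ext.mk₀ (h.S.f)).postcompOfLinear R X (add_zero j))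
    ((Abelian.Ext.mk₀ (h.S.g)).postcompOfLinear R X (add_zero j)) hA hC
    fun v hv => Abelian.Ext.covariant_sequence_exact₂ X h.se v hv

theorem Ses.e2 [IsNoetherianRing R] (h : Ses f g) {j : ℕ} (hB : EFin X B j)
    (hA : EFin X A (j+1)) : EFin X C j :=
  fin_mid' ((Abelian.Ext.mk₀ (h.S.g)).postcompOfLinear R X (add_zero j))
    ((h.se.extClass).postcompOfLinear R X rfl) hB hA
    fun v hv => Abelian.Ext.covariant_sequence_exact₃ X h.se v rfl hv

theorem Ses.e3 [IsNoetherianRing R] (h : Ses f g) {j : ℕ} (hC : EFin X C j)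
    (hB : EFin X B (j+1)) : EFin X A (j+1) :=
  fin_mid' ((h.se.extClass).postcompOfLinear R X rfl)
    ((Abelian.Ext.mk₀ (h.S.f)).postcompOfLinear R X (add_zero (j+1))) hC hB
    fun v hv => Abelian.Ext.covariant_sequence_exact₁ X h.se v hv rfl

theorem Ses.inj0 (h : Ses f g) (v : Abelian.Ext X h.S.X₁ 0)
    (hv : v.comp (Abelian.Ext.mk₀ h.S.f) (add_zero 0) = 0) : v = 0 := by
  haveI : Mono h.S.f := h.se.mono_f
  have := Abelian.Ext.postcomp_mk₀_injective_of_mono X h.S.f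
  apply this
  simpa using hv

theorem Ses.e0 [IsNoetherianRing R] (h : Ses f g) (hB : EFin X B 0) : EFin X A 0 :=
  fin_mid' (U := PUnit.{1}) 0
    ((Abelian.Ext.mk₀ (h.S.f)).postcompOfLinear R X (add_zero 0)) inferInstance hB
    fun v hv => ⟨0, by rw [h.inj0 X v hv]; rfl⟩

theorem ses_sub (N : Submodule R A) : Ses N.subtype N.mkQ :=
  ⟨N.injective_subtype, LinearMap.exact_subtype_mkQ N, N.mkQ_surjective⟩

theorem ses_ker (φ : A →ₗ[R] B) : Ses (LinearMap.ker φ).subtype φ.rangeRestrict :=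
  ⟨Submodule.injective_subtype _, by
    rw [LinearMap.exact_iff, LinearMap.ker_rangeRestrict, Submodule.range_subtype],
    φ.surjective_rangeRestrict⟩

theorem EFin.equiv {j : ℕ} (hA : EFin X A j) (e : A ≃ₗ[R] B) : EFin X B j := by
  unfold EFin at *
  refine Module.Finite.of_surjective
    ((Abelian.Ext.mk₀ (e.toModuleIso.hom)).postcompOfLinear R X (add_zero j)) fun v => ?_
  refine ⟨v.comp (Abelian.Ext.mk₀ e.toModuleIso.inv) (add_zero j), ?_⟩
  change (v.comp (Abelian.Ext.mk₀ e.toModuleIso.inv) (add_zero j)).comp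
    (Abelian.Ext.mk₀ e.toModuleIso.hom) (add_zero j) = v
  rw [Abelian.Ext.comp_assoc_of_third_deg_zero, Abelian.Ext.mk₀_comp_mk₀, Iso.inv_hom_id,
    Abelian.Ext.comp_mk₀_id]

theorem EFin.of_finite [IsNoetherianRing R] [Module.Finite R X] [Module.Finite R A] (j : ℕ) :
    EFin X A j := by
  unfold EFin
  infer_instance

end ses

variable (𝔞 : Ideal R)

/-- The residue module. -/
abbrev Q0 : ModuleCat.{u} R := ModuleCat.of R (R ⧸ 𝔞)

theorem ext_smul_zero {A : ModuleCat.{u} R} {j : ℕ} (v : Abelian.Ext (Q0 𝔞) A j) (x : R)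
    (hx : x ∈ 𝔞) : x • v = 0 := by
  have : x • 𝟙 (Q0 𝔞) = 0 := by
    apply ModuleCat.hom_ext
    apply LinearMap.ext
    intro y
    obtain ⟨y, rfl⟩ := Ideal.Quotient.mk_surjective y
    change x • (Ideal.Quotient.mk 𝔞 y) = 0
    rw [← Ideal.Quotient.mk_eq_mk, ← Submodule.Quotient.mk_smul]
    rw [Submodule.Quotient.mk_eq_zero]
    exact Ideal.mul_mem_right _ _ hx
  have h2 : x • v = (Abelian.Ext.mk₀ (x • 𝟙 (Q0 𝔞))).comp v (zero_add j) := by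
    simp [Abelian.Ext.mk₀_smul]
  rw [h2, this]
  simp

theorem melkersson [IsNoetherianRing R] {A : Type u} [AddCommGroup A] [Module R A] (x : R)
    (hx : x ∈ 𝔞)
    (hK : ∀ j, EFin (Q0 𝔞) (LinearMap.ker (LinearMap.lsmul R A x)) j)
    (hL : ∀ j, EFin (Q0 𝔞) (A ⧸ LinearMap.range (LinearMap.lsmul R A x)) j) (j : ℕ) :
    EFin (Q0 𝔞) A j := by
  have s1 := ses_ker (LinearMap.lsmul R A x)
  have s2 := ses_sub (LinearMap.range (LinearMap.lsmul R A x))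
  let β := (Abelian.Ext.mk₀ (s2.S.f)).postcompOfLinear R (Q0 𝔞) (add_zero j)
  let α := (Abelian.Ext.mk₀ (s1.S.g)).postcompOfLinear R (Q0 𝔞) (add_zero j)
  haveI : Module.Finite R (LinearMap.ker β) := by
    cases j with
    | zero =>
      have : LinearMap.ker β = ⊥ := by
        rw [LinearMap.ker_eq_bot']
        exact fun v hv => s2.inj0 _ v hv
      rw [this]
      infer_instance
    | succ j =>
      have hle : LinearMap.ker β ≤
          LinearMap.range ((s2.se.extClass).postcompOfLinear R (Q0 𝔞) (rfl : j + 1 = j + 1)) := by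
        intro v hv
        exact Abelian.Ext.covariant_sequence_exact₁ (Q0 𝔞) s2.se v hv rfl
      haveI := hL j
      unfold EFin at this
      rw [Module.Finite.iff_fg]
      refine Submodule.FG.of_le ?_ hle
      rw [← Module.Finite.iff_fg]
      infer_instance
  haveI := hK j
  unfold EFin at this
  refine fin_mid ((Abelian.Ext.mk₀ (s1.S.f)).postcompOfLinear R (Q0 𝔞) (add_zero j)) α
    (LinearMap.ker β) (fun v => ?_)
    fun v hv => Abelian.Ext.covariant_sequence_exact₂ (Q0 𝔞) s1.se v hv
  rw [LinearMap.mem_ker]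
  change (v.comp (Abelian.Ext.mk₀ s1.S.g) (add_zero j)).comp (Abelian.Ext.mk₀ s2.S.f) (add_zero j) = 0
  rw [Abelian.Ext.comp_assoc_of_third_deg_zero]
  have h1 : s1.S.g ≫ s2.S.f = x • 𝟙 (ModuleCat.of R A) := by
    ext a
    rfl
  have h2 := ext_smul_zero 𝔞 v x hx
  rw [Abelian.Ext.smul_eq_comp_mk₀] at h2
  rw [Abelian.Ext.mk₀_comp_mk₀, h1]
  exact h2

theorem hom_fin_iff (A : Type u) [AddCommGroup A] [Module R A] :
    EFin (Q0 𝔞) A 0 ↔ Module.Finite R ((R ⧸ 𝔞) →ₗ[R] A) := by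
  unfold EFin
  exact Module.Finite.equiv_iff (Abelian.Ext.linearEquiv₀.trans ModuleCat.homLinearEquiv)

theorem soc_fg {A : Type u} [AddCommGroup A] [Module R A] (h : EFin (Q0 𝔞) A 0) :
    (Submodule.torsionBySet R A (𝔞 : Set R)).FG := by
  rw [hom_fin_iff] at h
  let φ : ((R ⧸ 𝔞) →ₗ[R] A) →ₗ[R] A := LinearMap.applyₗ (Ideal.Quotient.mk 𝔞 1)
  have : Submodule.torsionBySet R A (𝔞 : Set R) = LinearMap.range φ := by
    ext a
    constructor
    · intro ha
      rw [Submodule.mem_torsionBySet_iff] at ha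
      have hle : 𝔞 ≤ LinearMap.ker (LinearMap.toSpanSingleton R A a) :=
        fun x hx => ha ⟨x, hx⟩
      refine ⟨Submodule.liftQ 𝔞 (LinearMap.toSpanSingleton R A a) hle, ?_⟩
      change (Submodule.liftQ 𝔞 (LinearMap.toSpanSingleton R A a) hle) (Submodule.Quotient.mk 1) = a
      rw [Submodule.liftQ_apply]
      simp
    · rintro ⟨ψ, rfl⟩
      rw [Submodule.mem_torsionBySet_iff]
      rintro ⟨x, hx⟩
      change x • ψ (Submodule.Quotient.mk 1) = 0
      rw [← map_smul, ← Submodule.Quotient.mk_smul]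
      have : (Submodule.Quotient.mk (x • 1) : R ⧸ 𝔞) = 0 := by
        rw [Submodule.Quotient.mk_eq_zero]
        simpa using hx
      rw [this, map_zero]
  rw [this, ← Module.Finite.iff_fg]
  infer_instance

end ExtKit
end WLC

namespace WLC
section Core
open Pointwise
variable {R : Type u} [CommRing R]

theorem IsTors.sub {𝔞 : Ideal R} {A : Type u} [AddCommGroup A] [Module R A] (h : IsTors 𝔞 A)
    (N : Submodule R A) : IsTors 𝔞 N := by
  rintro ⟨a, ha⟩
  obtain ⟨n, hn⟩ := h a
  exact ⟨n, fun x hx => Subtype.ext (hn x hx)⟩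

theorem IsTors.quot {𝔞 : Ideal R} {A : Type u} [AddCommGroup A] [Module R A] (h : IsTors 𝔞 A)
    (N : Submodule R A) : IsTors 𝔞 (A ⧸ N) := by
  intro a
  obtain ⟨a, rfl⟩ := N.mkQ_surjective a
  obtain ⟨n, hn⟩ := h a
  exact ⟨n, fun x hx => by rw [← map_smul, hn x hx, map_zero]⟩

theorem supp_sub {A : Type u} [AddCommGroup A] [Module R A] (N : Submodule R A) :
    Module.support R N ⊆ Module.support R A :=
  Module.support_subset_of_injective N.subtype N.injective_subtype

theorem supp_quot {A : Type u} [AddCommGroup A] [Module R A] (N : Submodule R A) :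
    Module.support R (A ⧸ N) ⊆ Module.support R A :=
  Module.support_subset_of_surjective N.mkQ N.mkQ_surjective

theorem supp_quot_anti {A : Type u} [AddCommGroup A] [Module R A] {N N' : Submodule R A}
    (h : N ≤ N') : Module.support R (A ⧸ N') ⊆ Module.support R (A ⧸ N) :=
  Module.support_subset_of_surjective (Submodule.factor h) (Submodule.factor_surjective h)

theorem generic_all [IsNoetherianRing R] (𝔞 : Ideal R) {A : Type u} [AddCommGroup A] [Module R A]
    (hA : IsTors 𝔞 A) (hfg : (Submodule.torsionBySet R A (𝔞:Set R)).FG)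
    (T : Set (PrimeSpectrum R)) (hT : T.Finite)
    (hmin : ∀ p ∈ T, ∀ q ∈ Module.support R A, q.asIdeal ≤ p.asIdeal → p.asIdeal ≤ q.asIdeal) :
    ∃ x ∈ 𝔞, ∃ N : Submodule R A, N.FG ∧
      ∀ p ∈ T, p ∉ Module.support R (A ⧸ (N ⊔ LinearMap.range (LinearMap.lsmul R A x))) := by
  choose! Q hQ1 hQ2 hQ3 using fun p hp => generic_at 𝔞 A hA hfg p (hmin p hp)
  let U : Set (Ideal R) := ⋃ p ∈ T, Q p
  have hU : U.Finite := hT.biUnion fun p hp => hQ1 p hp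
  have hU2 : ∀ q ∈ U, q.IsPrime ∧ ¬ 𝔞 ≤ q := by
    intro q hq
    simp only [U, Set.mem_iUnion] at hq
    obtain ⟨p, hp, hq⟩ := hq
    exact hQ2 p hp q hq
  obtain ⟨x, hx, hxU⟩ : ∃ x ∈ 𝔞, ∀ q ∈ U, x ∉ q := by
    by_contra! hcon
    have := (Ideal.subset_union_prime_finite hU (f := id) (I := 𝔞) 0 0
      (fun q hq _ _ => (hU2 q hq).1)).1 (by
        intro x hx
        obtain ⟨q, hq, hxq⟩ := hcon x hx
        simp only [Set.mem_iUnion]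
        exact ⟨q, hq, hxq⟩)
    obtain ⟨q, hq, hle⟩ := this
    exact (hU2 q hq).2 hle
  choose! N hN1 hN2 using fun p hp => hQ3 p hp x
    (fun q hq => hxU q (by simp only [U, Set.mem_iUnion]; exact ⟨p, hp, hq⟩))
  refine ⟨x, hx, ⨆ p ∈ hT.toFinset, N p, ?_, ?_⟩
  · exact Submodule.fg_biSup _ _ fun p hp => hN1 p (hT.mem_toFinset.1 hp)
  · intro p hp hps
    refine hN2 p hp (supp_quot_anti ?_ hps)
    refine sup_le_sup ?_ ?_
    · exact le_biSup N (hT.mem_toFinset.2 hp)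
    · intro a ha
      obtain ⟨b, -, rfl⟩ := (Submodule.mem_smul_pointwise_iff_exists _ _ _).1 ha
      exact ⟨b, rfl⟩

theorem step [IsNoetherianRing R] (𝔞 : Ideal R) (W T : Set (PrimeSpectrum R)) (hT : T.Finite)
    (k : ℕ) (hk : k ≤ 1)
    (hW : ∀ (B : Type u) [AddCommGroup B] [Module R B], IsTors 𝔞 B → Module.support R B ⊆ W →
      (∀ j < k, EFin (Q0 𝔞) B j) → ∀ j, EFin (Q0 𝔞) B j)
    (hmin : ∀ p ∈ T, ∀ q ∈ W ∪ T, q.asIdeal ≤ p.asIdeal → p.asIdeal ≤ q.asIdeal)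
    (c : Ideal R) : ∀ (A : Type u) [AddCommGroup A] [Module R A], IsTors 𝔞 A →
      (∀ x ∈ c, ∀ a : A, x • a = 0) → Module.support R A ⊆ W ∪ T →
      (∀ j ≤ k, EFin (Q0 𝔞) A j) → ∀ j, EFin (Q0 𝔞) A j := by
  induction c using WellFoundedGT.induction with
  | ind c IH =>
  intro A _ _ hA hc hS hE
  obtain ⟨x, hx, N, hN, hNT⟩ := generic_all 𝔞 hA (soc_fg 𝔞 (hE 0 (Nat.zero_le _))) T hT
    (fun p hp q hq => hmin p hp q (hS hq))
  haveI : Module.Finite R N := Module.Finite.iff_fg.2 hN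
  have hSW : Module.support R (A ⧸ (N ⊔ LinearMap.range (LinearMap.lsmul R A x))) ⊆ W := by
    intro p hp
    rcases hS (supp_quot _ hp) with h | h
    · exact h
    · exact absurd hp (hNT p h)
  by_cases hxc : x ∈ c
  · have h0 : LinearMap.range (LinearMap.lsmul R A x) = ⊥ := by
      rw [eq_bot_iff]
      rintro _ ⟨a, rfl⟩
      exact hc x hxc a
    rw [h0, sup_bot_eq] at hSW
    have s := ses_sub N
    have hq := hW (A ⧸ N) (hA.quot N) hSW
      (fun j hj => s.e2 _ (hE j hj.le) (EFin.of_finite _ _))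
    exact fun j => s.e1 _ (EFin.of_finite _ _) (hq j)
  · have s1 := ses_ker (LinearMap.lsmul R A x)
    have s2 := ses_sub (LinearMap.range (LinearMap.lsmul R A x))
    have hK : ∀ j, EFin (Q0 𝔞) (LinearMap.ker (LinearMap.lsmul R A x)) j := by
      refine IH (c ⊔ Ideal.span {x}) ?_ _ (hA.sub _) ?_ ((supp_sub _).trans hS) ?_
      · refine lt_of_le_of_ne le_sup_left fun h => hxc ?_
        rw [h]
        exact Ideal.mem_sup_right (Ideal.mem_span_singleton_self x)
      · intro y hy
        obtain ⟨y1, hy1, y2, hy2, rfl⟩ := Submodule.mem_sup.1 hy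
        obtain ⟨r, rfl⟩ := Ideal.mem_span_singleton'.1 hy2
        rintro ⟨a, ha⟩
        apply Subtype.ext
        have ha' : x • a = 0 := ha
        change (y1 + r * x) • a = 0
        rw [add_smul, hc y1 hy1, mul_smul, ha', smul_zero, add_zero]
      · intro j hj
        obtain rfl | rfl : j = 0 ∨ j = 1 := by omega
        · exact s1.e0 _ (hE 0 hj)
        · exact s1.e3 _ (s2.e0 _ (hE 0 (Nat.zero_le _))) (hE 1 hj)
    have hxA : ∀ j ≤ k, EFin (Q0 𝔞) (LinearMap.range (LinearMap.lsmul R A x)) j :=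
      fun j hj => s1.e2 _ (hE j hj) (hK (j+1))
    let L := A ⧸ LinearMap.range (LinearMap.lsmul R A x)
    let N' : Submodule R L := N.map (LinearMap.range (LinearMap.lsmul R A x)).mkQ
    haveI : Module.Finite R N' := Module.Finite.iff_fg.2 (hN.map _)
    have hL : ∀ j < k, EFin (Q0 𝔞) L j :=
      fun j hj => s2.e2 _ (hE j hj.le) (hxA (j+1) hj)
    have s3 := ses_sub N'
    have e : (L ⧸ N') ≃ₗ[R] (A ⧸ (N ⊔ LinearMap.range (LinearMap.lsmul R A x))) :=
      (Submodule.quotientQuotientEquivQuotientSup _ _).trans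
        (Submodule.quotEquivOfEq _ _ (sup_comm _ _))
    have hL' := hW (L ⧸ N') ((hA.quot _).quot _)
      (by rw [e.support_eq]; exact hSW)
      (fun j hj => s3.e2 _ (hL j hj) (EFin.of_finite _ _))
    exact melkersson 𝔞 x hx hK (fun j => s3.e1 _ (EFin.of_finite _ _) (hL' j))

end Core
end WLC

namespace WLC
section Core2
variable {R : Type u} [CommRing R]

theorem map_lt {q p m : Ideal R} (hqp : q ≤ p) (hpm : p < m) :
    p.map (Ideal.Quotient.mk q) < m.map (Ideal.Quotient.mk q) := by
  refine lt_of_le_of_ne (Ideal.map_mono hpm.le) fun h => ?_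
  have h1 := congrArg (Ideal.comap (Ideal.Quotient.mk q)) h
  rw [Ideal.comap_map_of_surjective' _ Ideal.Quotient.mk_surjective,
    Ideal.comap_map_of_surjective' _ Ideal.Quotient.mk_surjective, Ideal.mk_ker,
    sup_eq_left.2 hqp, sup_eq_left.2 (hqp.trans hpm.le)] at h1
  exact hpm.ne h1

theorem no_chain [IsNoetherianRing R] {q p m : Ideal R} [hq : q.IsPrime] [hp : p.IsPrime]
    [hm : m.IsPrime] (hqp : q < p) (hpm : p < m)
    (hfin : {r : Ideal R | r.IsPrime ∧ q ≤ r}.Finite) : False := by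
  have hU : {r : Ideal R | (r.IsPrime ∧ q ≤ r) ∧ ¬ m ≤ r}.Finite := hfin.subset fun r hr => hr.1
  obtain ⟨y, hy, hyU⟩ : ∃ y ∈ m, ∀ r : Ideal R, r.IsPrime → q ≤ r → ¬ m ≤ r → y ∉ r := by
    by_contra! hcon
    obtain ⟨r, hr, hle⟩ := (Ideal.subset_union_prime_finite hU (f := id) (I := m) 0 0
      (fun q hq _ _ => hq.1.1)).1 (by
        intro x hx
        obtain ⟨r, hr1, hr2, hr3, hr4⟩ := hcon x hx
        simp only [Set.mem_iUnion]
        exact ⟨r, ⟨⟨hr1, hr2⟩, hr3⟩, hr4⟩)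
    exact hr.2 hle
  have hmin : m ∈ (q ⊔ Ideal.span {y}).minimalPrimes := by
    refine ⟨⟨hm, sup_le (hqp.le.trans hpm.le) ((Ideal.span_singleton_le_iff_mem _).2 hy)⟩, ?_⟩
    rintro r ⟨hr, hle⟩ -
    by_contra hc
    refine hyU r hr (le_sup_left.trans hle) hc (hle ?_)
    exact Ideal.mem_sup_right (Ideal.mem_span_singleton_self y)
  have h1 := Ideal.map_height_le_one_of_mem_minimalPrimes hmin
  have hker : ∀ r : Ideal R, q ≤ r → RingHom.ker (Ideal.Quotient.mk q) ≤ r := fun r hr => by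
    rwa [Ideal.mk_ker]
  haveI : (m.map (Ideal.Quotient.mk q)).IsPrime :=
    Ideal.map_isPrime_of_surjective Ideal.Quotient.mk_surjective (hker _ (hqp.le.trans hpm.le))
  haveI : (p.map (Ideal.Quotient.mk q)).IsPrime :=
    Ideal.map_isPrime_of_surjective Ideal.Quotient.mk_surjective (hker _ hqp.le)
  haveI : (q.map (Ideal.Quotient.mk q)).IsPrime :=
    Ideal.map_isPrime_of_surjective Ideal.Quotient.mk_surjective (hker _ le_rfl)
  have h2 := Ideal.height_add_one_le_of_lt_of_isPrime (map_lt hqp.le hpm)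
  have h3 := Ideal.height_add_one_le_of_lt_of_isPrime (map_lt le_rfl hqp)
  have h4 : (2 : ℕ∞) ≤ 1 := by
    calc (2 : ℕ∞) = 0 + 1 + 1 := by norm_num
      _ ≤ (q.map (Ideal.Quotient.mk q)).height + 1 + 1 := by gcongr; exact zero_le
      _ ≤ (p.map (Ideal.Quotient.mk q)).height + 1 := by gcongr
      _ ≤ _ := h2
      _ ≤ 1 := h1
  exact absurd h4 (by norm_num)

theorem core_a [IsNoetherianRing R] (𝔞 : Ideal R) (A : Type u) [AddCommGroup A] [Module R A]
    (hA : IsTors 𝔞 A) (hS : (Module.support R A).Finite)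
    (hmax : ∀ p ∈ Module.support R A, p.asIdeal.IsMaximal) (h0 : EFin (Q0 𝔞) A 0) (j : ℕ) :
    EFin (Q0 𝔞) A j := by
  refine step 𝔞 ∅ (Module.support R A) hS 0 (Nat.zero_le _) ?_ ?_ ⊥ A hA ?_ ?_ ?_ j
  · intro B _ _ _ hB _ j
    haveI : Subsingleton B := Module.support_eq_empty_iff.1 (Set.subset_empty_iff.1 hB)
    exact EFin.of_finite _ _
  · intro p hp q hq hle
    rw [Set.empty_union] at hq
    exact ((hmax q hq).eq_of_le p.2.ne_top hle).ge
  · intro x hx a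
    rw [Ideal.mem_bot.1 hx, zero_smul]
  · exact Set.subset_union_right
  · intro j hj
    obtain rfl : j = 0 := by omega
    exact h0

theorem core_b [IsNoetherianRing R] (𝔞 : Ideal R) (A : Type u) [AddCommGroup A] [Module R A]
    (hA : IsTors 𝔞 A) (hS : (Module.support R A).Finite)
    (h0 : EFin (Q0 𝔞) A 0) (h1 : EFin (Q0 𝔞) A 1) (j : ℕ) :
    EFin (Q0 𝔞) A j := by
  refine step 𝔞 {p | p ∈ Module.support R A ∧ p.asIdeal.IsMaximal}
    {p | p ∈ Module.support R A ∧ ¬ p.asIdeal.IsMaximal} (hS.subset fun p hp => hp.1)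
    1 le_rfl ?_ ?_ ⊥ A hA ?_ ?_ ?_ j
  · intro B _ _ hB hBS hBE
    exact core_a 𝔞 B hB (hS.subset fun p hp => (hBS hp).1) (fun p hp => (hBS hp).2)
      (hBE 0 Nat.one_pos)
  · rintro p ⟨hp, hpm⟩ q hq hle
    have hqS : q ∈ Module.support R A := by
      rcases hq with h | h <;> exact h.1
    by_contra hc
    have hlt : q.asIdeal < p.asIdeal := lt_of_le_not_ge hle hc
    obtain ⟨m, hm, hpm'⟩ := Ideal.exists_le_maximal p.asIdeal p.2.ne_top
    have hlt2 : p.asIdeal < m := lt_of_le_of_ne hpm' fun h => hpm (h ▸ hm)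
    haveI := hm.isPrime
    haveI := p.2
    haveI := q.2
    refine no_chain hlt hlt2 ((hS.image PrimeSpectrum.asIdeal).subset ?_)
    rintro r ⟨hr, hqr⟩
    exact ⟨⟨r, hr⟩, Module.mem_support_mono (p := q) hqr hqS, rfl⟩
  · intro x hx a
    rw [Ideal.mem_bot.1 hx, zero_smul]
  · intro p hp
    by_cases h : p.asIdeal.IsMaximal
    · exact Or.inl ⟨hp, h⟩
    · exact Or.inr ⟨hp, h⟩
  · intro j hj
    obtain rfl | rfl : j = 0 ∨ j = 1 := by omega
    · exact h0
    · exact h1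

theorem core [IsNoetherianRing R] (𝔞 : Ideal R) (A : Type u) [AddCommGroup A] [Module R A]
    (hA : IsTors 𝔞 A) (hWL : ∀ N : Submodule R A, (associatedPrimes R (A ⧸ N)).Finite)
    (h0 : EFin (Q0 𝔞) A 0) (h1 : EFin (Q0 𝔞) A 1) (j : ℕ) :
    EFin (Q0 𝔞) A j := by
  obtain ⟨N, hN, hS⟩ := fsf hWL
  haveI : Module.Finite R N := Module.Finite.iff_fg.2 hN
  have s := ses_sub N
  exact s.e1 _ (EFin.of_finite _ _) (core_b 𝔞 (A ⧸ N) (hA.quot N) hS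
    (s.e2 _ h0 (EFin.of_finite _ _)) (s.e2 _ h1 (EFin.of_finite _ _)) j)

end Core2
end WLC

namespace WLC
section Compare
variable {R : Type u} [CommRing R] {X : ModuleCat.{u} R} (P : ProjectiveResolution X)
  (Y : ModuleCat.{u} R) (n : ℕ)

/-- The complex in the opposite category. -/
noncomputable abbrev KK : ChainComplex (ModuleCat.{u} R)ᵒᵖ ℕ :=
  (((linearYoneda R (ModuleCat.{u} R)).obj Y).rightOp.mapHomologicalComplex _).obj P.complex

/-- Cocycles. -/
noncomputable abbrev UU : ModuleCat.{u} R := ((KK P Y).opcycles n).unop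

/-- The inclusion of cocycles in cochains. -/
noncomputable def incl : UU P Y n →ₗ[R] (P.complex.X n ⟶ Y) := ((KK P Y).pOpcycles n).unop.hom

theorem incl_inj : Function.Injective (incl P Y n) := by
  have : Mono ((KK P Y).pOpcycles n).unop := inferInstance
  exact (ModuleCat.mono_iff_injective _).1 this

theorem incl_exact (f : P.complex.X n ⟶ Y) :
    P.complex.d (n+1) n ≫ f = 0 ↔ ∃ u, incl P Y n u = f := by
  have h1 := ShortComplex.exact_of_g_is_cokernel
    (ShortComplex.mk _ _ ((KK P Y).d_pOpcycles (n+1) n))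
    ((KK P Y).opcyclesIsCokernel (n+1) n (by simp))
  have h2 := (ShortComplex.ShortExact.moduleCat_exact_iff_function_exact _).1 h1.unop
  exact h2 f

/-- cocycles to homology -/
noncomputable def toH : UU P Y n →ₗ[R] ((KK P Y).homology n).unop := ((KK P Y).homologyι n).unop.hom

theorem toH_surj : Function.Surjective (toH P Y n) := by
  have : Epi ((KK P Y).homologyι n).unop := inferInstance
  exact (ModuleCat.epi_iff_surjective _).1 this

theorem toH_exact (m : ℕ) (hm : (ComplexShape.down ℕ).next n = m) (u : UU P Y n) :
    toH P Y n u = 0 ↔ ∃ g : P.complex.X m ⟶ Y, P.complex.d n m ≫ g = incl P Y n u := by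
  have h1 := ShortComplex.exact_of_f_is_kernel
    (ShortComplex.mk _ _ ((KK P Y).homologyι_comp_fromOpcycles n m))
    ((KK P Y).homologyIsKernel n m hm)
  have h2 := (ShortComplex.ShortExact.moduleCat_exact_iff_function_exact _).1 h1.unop
  refine (h2 u).trans ?_
  have h3 : ∀ g : P.complex.X m ⟶ Y, incl P Y n (((KK P Y).fromOpcycles n m).unop.hom g) =
      P.complex.d n m ≫ g := by
    intro g
    have := (KK P Y).p_fromOpcycles n m
    have := congrArg (fun z => z.unop.hom g) this
    exact this
  constructor
  · rintro ⟨g, hg⟩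
    exact ⟨g, (h3 g).symm.trans (congrArg _ hg)⟩
  · rintro ⟨g, hg⟩
    exact ⟨g, incl_inj P Y n ((h3 g).trans hg)⟩

theorem incl_d (u : UU P Y n) : P.complex.d (n+1) n ≫ incl P Y n u = 0 :=
  (incl_exact P Y n _).2 ⟨u, rfl⟩

/-- cocycles to new Ext -/
noncomputable def toE : UU P Y n →ₗ[R] Abelian.Ext X Y n where
  toFun u := P.extMk (incl P Y n u) (n+1) rfl (incl_d P Y n u)
  map_add' u v := by
    rw [P.add_extMk]
    congr 1
    rw [map_add]
  map_smul' r u := by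
    rw [RingHom.id_apply, Abelian.Ext.smul_eq_comp_mk₀, P.extMk_comp_mk₀]
    congr 1
    rw [map_smul]
    simp

theorem toE_surj : Function.Surjective (toE P Y n) := by
  intro α
  obtain ⟨f, hf, rfl⟩ := P.extMk_surjective α (n+1) rfl
  obtain ⟨u, rfl⟩ := (incl_exact P Y n f).1 hf
  exact ⟨u, rfl⟩

theorem ker_eq : LinearMap.ker (toH P Y n) = LinearMap.ker (toE P Y n) := by
  ext u
  rw [LinearMap.mem_ker, LinearMap.mem_ker]
  cases n with
  | succ p =>
    rw [toH_exact P Y (p+1) p (by simp)]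
    exact (P.extMk_eq_zero_iff (incl P Y _ u) _ rfl (incl_d P Y _ u) p rfl).symm
  | zero =>
    rw [toH_exact P Y 0 _ rfl]
    have hd : P.complex.d 0 ((ComplexShape.down ℕ).next 0) = 0 := by
      apply P.complex.shape
      simp
    constructor
    · rintro ⟨g, hg⟩
      rw [hd, Limits.zero_comp] at hg
      have : u = 0 := incl_inj P Y 0 (by rw [← hg, map_zero])
      rw [this, map_zero]
    · intro h
      refine ⟨0, ?_⟩
      rw [Limits.comp_zero]
      symm
      change P.extMk (incl P Y 0 u) 1 rfl (incl_d P Y 0 u) = 0 at h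
      rw [← P.extEquivCohomologyClass.apply_eq_iff_eq, P.extEquivCohomologyClass_extMk,
        P.extEquivCohomologyClass_zero, CochainComplex.HomComplex.CohomologyClass.mk_eq_zero_iff,
        CochainComplex.HomComplex.Cocycle.toSingleMk_mem_coboundaries_iff _ _ _ _ _ 1 (by simp)] at h
      obtain ⟨g, hg⟩ := h
      have hz : P.cochainComplex.d (-((0:ℕ):ℤ)) 1 = 0 :=
        ((CochainComplex.isStrictlyLE_iff P.cochainComplex 0).1 inferInstance 1
          (by norm_num)).eq_of_tgt _ _
      rw [hz, Limits.zero_comp] at hg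
      rw [← cancel_epi (P.cochainComplexXIso (-((0:ℕ):ℤ)) 0 rfl).hom, ← hg, Limits.comp_zero]

/-- homology of the Hom complex is the new Ext -/
noncomputable def cmpH : ((KK P Y).homology n).unop ≃ₗ[R] Abelian.Ext X Y n :=
  ((toH P Y n).quotKerEquivOfSurjective (toH_surj P Y n)).symm.trans
    ((Submodule.quotEquivOfEq _ _ (ker_eq P Y n)).trans
      ((toE P Y n).quotKerEquivOfSurjective (toE_surj P Y n)))

theorem cmpH_toH (u : UU P Y n) : cmpH P Y n (toH P Y n u) = toE P Y n u := by
  have : ((toH P Y n).quotKerEquivOfSurjective (toH_surj P Y n)).symm (toH P Y n u) =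
      Submodule.Quotient.mk u := by
    rw [LinearEquiv.symm_apply_eq]
    rfl
  unfold cmpH
  rw [LinearEquiv.trans_apply, this]
  rfl

variable (R) in
/-- The old Ext. -/
noncomputable abbrev oldExt (X Y : ModuleCat.{u} R) (n : ℕ) : ModuleCat.{u} R :=
  ((Ext R (ModuleCat.{u} R) n).obj (Opposite.op X)).obj Y

/-- the old Ext as homology -/
noncomputable def oldH : oldExt R X Y n ≃ₗ[R] ((KK P Y).homology n).unop :=
  (P.isoLeftDerivedObj ((linearYoneda R (ModuleCat.{u} R)).obj Y).rightOp n).unop.symm.toLinearEquiv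

/-- The comparison. -/
noncomputable def cmp : oldExt R X Y n ≃ₗ[R] Abelian.Ext X Y n :=
  (oldH P Y n).trans (cmpH P Y n)

theorem cmp_nat {X' : ModuleCat.{u} R} (P' : ProjectiveResolution X') (f : X ⟶ X')
    (x : oldExt R X' Y n) :
    cmp P Y n ((((Ext R (ModuleCat.{u} R) n).map f.op).app Y).hom x) =
      (Abelian.Ext.mk₀ f).comp (cmp P' Y n x) (zero_add n) := by
  obtain ⟨y, rfl⟩ := (oldH P' Y n).symm.surjective x
  obtain ⟨u, rfl⟩ := toH_surj P' Y n y
  let φ := ProjectiveResolution.lift f P P'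
  let φ' : KK P Y ⟶ KK P' Y :=
    (((linearYoneda R (ModuleCat.{u} R)).obj Y).rightOp.mapHomologicalComplex _).map φ
  let v : UU P Y n := (HomologicalComplex.opcyclesMap φ' n).unop.hom u
  have h1 : incl P Y n v = φ.f n ≫ incl P' Y n u := by
    have := congrArg (fun z => z.unop.hom u) (HomologicalComplex.p_opcyclesMap φ' n)
    exact this
  have h2 : toH P Y n v = (HomologicalComplex.homologyMap φ' n).unop.hom (toH P' Y n u) := by
    have := congrArg (fun z => z.unop.hom u) (HomologicalComplex.homologyι_naturality φ' n)
    exact this.symm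
  have h3 : (((Ext R (ModuleCat.{u} R) n).map f.op).app Y).hom ((oldH P' Y n).symm (toH P' Y n u))
      = (oldH P Y n).symm (toH P Y n v) := by
    have h := ProjectiveResolution.isoLeftDerivedObj_hom_naturality f P P' φ
      (ProjectiveResolution.lift_commutes_zero f P P')
      ((linearYoneda R (ModuleCat.{u} R)).obj Y).rightOp n
    have := congrArg (fun z => z.unop.hom (toH P' Y n u)) h
    rw [h2]
    exact this
  unfold cmp
  rw [h3, LinearEquiv.trans_apply, LinearEquiv.trans_apply, LinearEquiv.apply_symm_apply,
    LinearEquiv.apply_symm_apply, cmpH_toH, cmpH_toH]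
  let Φ : ProjectiveResolution.Hom P P' f :=
    ⟨φ, (ProjectiveResolution.lift_commutes_zero f P P').trans (by simp)⟩
  have h4 := ProjectiveResolution.mk₀_comp_extMk (incl P' Y n u) (n+1) rfl (incl_d P' Y n u) Φ
  refine Eq.trans ?_ h4.symm
  change P.extMk (incl P Y n v) (n+1) rfl (incl_d P Y n v) = _
  congr 1

end Compare
end WLC

namespace WLC
section LC
variable {R : Type u} [CommRing R] (𝔞 : Ideal R)

/-- `R/𝔞^n` -/
abbrev Qn (n : ℕ) : ModuleCat.{u} R := ModuleCat.of R (R ⧸ 𝔞 ^ n)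

/-- the transition maps -/
noncomputable def qmap {n m : ℕ} (h : n ≤ m) : Qn 𝔞 m ⟶ Qn 𝔞 n :=
  ModuleCat.ofHom (Submodule.mapQ _ _ LinearMap.id (Ideal.pow_le_pow_right h))

/-- restriction -/
noncomputable def res {M : ModuleCat.{u} R} {i : ℕ} {n m : ℕ} (h : n ≤ m)
    (x : Abelian.Ext (Qn 𝔞 n) M i) : Abelian.Ext (Qn 𝔞 m) M i :=
  (Abelian.Ext.mk₀ (qmap 𝔞 h)).comp x (zero_add i)

/-- `H` is the direct limit of the `Ext^i(R/𝔞^n, M)`. -/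
structure IsLim (M : ModuleCat.{u} R) (i : ℕ) (H : Type u) [AddCommGroup H] [Module R H]
    (ι : ∀ n, Abelian.Ext (Qn 𝔞 n) M i →ₗ[R] H) : Prop where
  surj : ∀ h, ∃ n x, ι n x = h
  compat : ∀ {n m} (h : n ≤ m) x, ι m (res 𝔞 h x) = ι n x
  ker : ∀ {n} x, ι n x = 0 → ∃ m, ∃ h : n ≤ m, res 𝔞 h x = 0

theorem exists_isLim (M : ModuleCat.{u} R) (i : ℕ) :
    ∃ ι : ∀ n, Abelian.Ext (Qn 𝔞 n) M i →ₗ[R] (localCohomology 𝔞 i).obj M,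
      IsLim 𝔞 M i ((localCohomology 𝔞 i).obj M) ι := by
  let D := localCohomology.diagram (localCohomology.idealPowersDiagram 𝔞) i
  haveI : Limits.HasColimit D := localCohomology.hasColimitDiagram.{u, 0} _ _
  let ev := (evaluation (ModuleCat.{u} R) (ModuleCat.{u} R)).obj M
  let cc := ev.mapCocone (Limits.colimit.cocone D)
  have hcc : Limits.IsColimit cc := Limits.isColimitOfPreserves ev (Limits.colimit.isColimit D)
  let P : ∀ n, ProjectiveResolution (Qn 𝔞 n) := fun n => ProjectiveResolution.of _
  let ι0 : ∀ n : ℕ, oldExt R (Qn 𝔞 n) M i →ₗ[R] (localCohomology 𝔞 i).obj M := fun n =>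
    (cc.ι.app (Opposite.op (Opposite.op n))).hom
  let c : ∀ n, oldExt R (Qn 𝔞 n) M i ≃ₗ[R] Abelian.Ext (Qn 𝔞 n) M i := fun n => cmp (P n) M i
  have hres : ∀ {n m : ℕ} (h : n ≤ m) (y : oldExt R (Qn 𝔞 n) M i),
      c m (((D ⋙ ev).map (homOfLE h).op.op).hom y) = res 𝔞 h (c n y) := by
    intro n m h y
    exact cmp_nat (P m) M i (P n) (qmap 𝔞 h) y
  have hι0 : ∀ {n m : ℕ} (h : n ≤ m) (y : oldExt R (Qn 𝔞 n) M i),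
      ι0 m (((D ⋙ ev).map (homOfLE h).op.op).hom y) = ι0 n y := by
    intro n m h y
    have := congrArg (fun z => z.hom y) (cc.w (homOfLE h).op.op)
    exact this
  haveI : IsFiltered (ℕᵒᵖᵒᵖ) := inferInstance
  haveI : Limits.PreservesFilteredColimitsOfSize.{0, 0} (forget (ModuleCat.{u} R)) :=
    Limits.preservesFilteredColimitsOfSize_shrink.{0, u, 0, u} _
  haveI : Limits.PreservesColimitsOfShape (ℕᵒᵖᵒᵖ) (forget (ModuleCat.{u} R)) :=
    Limits.PreservesFilteredColimitsOfSize.preserves_filtered_colimits _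
  refine ⟨fun n => (ι0 n).comp (c n).symm.toLinearMap, ?_, ?_, ?_⟩
  · intro h
    obtain ⟨j, y, hy⟩ := Limits.Concrete.isColimit_exists_rep _ hcc h
    exact ⟨j.unop.unop, c _ y, (congrArg _ ((c _).symm_apply_apply y)).trans hy⟩
  · intro n m h x
    obtain ⟨y, rfl⟩ := (c n).surjective x
    rw [← hres]
    simp only [LinearMap.comp_apply, LinearEquiv.coe_coe, LinearEquiv.symm_apply_apply]
    exact (congrArg (ι0 m) ((c m).symm_apply_apply _)).trans (hι0 h y)
  · intro n x hx
    obtain ⟨y, rfl⟩ := (c n).surjective x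
    simp only [LinearMap.comp_apply, LinearEquiv.coe_coe, LinearEquiv.symm_apply_apply] at hx
    obtain ⟨k, f, g, hk⟩ := Limits.Concrete.isColimit_exists_of_rep_eq _ hcc
      (i := Opposite.op (Opposite.op n)) (j := Opposite.op (Opposite.op n)) y 0
      (hx.trans (map_zero (ι0 n)).symm)
    have hle : n ≤ k.unop.unop := f.unop.unop.down.down
    refine ⟨k.unop.unop, hle, ?_⟩
    rw [← hres]
    have h1 : ((D ⋙ ev).map f).hom y = 0 := hk.trans (map_zero ((D ⋙ ev).map g).hom)
    exact (congrArg _ h1).trans (map_zero _)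

end LC
end WLC

namespace WLC
section LC2
variable {R : Type u} [CommRing R] (𝔞 : Ideal R)

theorem qmap_comp {n m k : ℕ} (h : n ≤ m) (h' : m ≤ k) :
    qmap 𝔞 h' ≫ qmap 𝔞 h = qmap 𝔞 (h.trans h') := by
  apply ModuleCat.hom_ext
  apply LinearMap.ext
  intro y
  obtain ⟨y, rfl⟩ := Submodule.Quotient.mk_surjective _ y
  rfl

theorem res_res {M : ModuleCat.{u} R} {i : ℕ} {n m k : ℕ} (h : n ≤ m) (h' : m ≤ k)
    (x : Abelian.Ext (Qn 𝔞 n) M i) : res 𝔞 h' (res 𝔞 h x) = res 𝔞 (h.trans h') x := by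
  unfold res
  rw [← qmap_comp 𝔞 h h', ← Abelian.Ext.mk₀_comp_mk₀, Abelian.Ext.comp_assoc]
  all_goals omega

theorem res_add {M : ModuleCat.{u} R} {i : ℕ} {n m : ℕ} (h : n ≤ m)
    (x y : Abelian.Ext (Qn 𝔞 n) M i) : res 𝔞 h (x + y) = res 𝔞 h x + res 𝔞 h y := by
  unfold res
  rw [Abelian.Ext.comp_add]

theorem res_zero {M : ModuleCat.{u} R} {i : ℕ} {n m : ℕ} (h : n ≤ m) :
    res 𝔞 h (0 : Abelian.Ext (Qn 𝔞 n) M i) = 0 := by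
  unfold res
  rw [Abelian.Ext.comp_zero]

theorem res_sub {M : ModuleCat.{u} R} {i : ℕ} {n m : ℕ} (h : n ≤ m)
    (x y : Abelian.Ext (Qn 𝔞 n) M i) : res 𝔞 h (x - y) = res 𝔞 h x - res 𝔞 h y := by
  rw [eq_sub_iff_add_eq, ← res_add, sub_add_cancel]

theorem res_comp {M M' : ModuleCat.{u} R} {i j k : ℕ} {n m : ℕ} (h : n ≤ m)
    (x : Abelian.Ext (Qn 𝔞 n) M i) (y : Abelian.Ext M M' j) (hk : i + j = k) :
    res 𝔞 h (x.comp y hk) = (res 𝔞 h x).comp y hk := by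
  unfold res
  rw [Abelian.Ext.comp_assoc]
  omega

theorem indEquiv {M M' : ModuleCat.{u} R} {i i' : ℕ} {H H' : Type u} [AddCommGroup H] [Module R H]
    [AddCommGroup H'] [Module R H'] {ι : ∀ n, Abelian.Ext (Qn 𝔞 n) M i →ₗ[R] H}
    {ι' : ∀ n, Abelian.Ext (Qn 𝔞 n) M' i' →ₗ[R] H'}
    (hι : IsLim 𝔞 M i H ι) (hι' : IsLim 𝔞 M' i' H' ι')
    (φ : ∀ n, Abelian.Ext (Qn 𝔞 n) M i →ₗ[R] Abelian.Ext (Qn 𝔞 n) M' i')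
    (hφ : ∀ {n m} (h : n ≤ m) x, φ m (res 𝔞 h x) = res 𝔞 h (φ n x))
    (hinj : ∀ n x, φ n x = 0 → ∃ m, ∃ h : n ≤ m, res 𝔞 h x = 0)
    (hsurj : ∀ n y, ∃ m, ∃ h : n ≤ m, ∃ x, φ m x = res 𝔞 h y) :
    Nonempty (H ≃ₗ[R] H') := by
  choose N X hX using hι.surj
  let f : H → H' := fun h => ι' (N h) (φ _ (X h))
  have key : ∀ n (x : Abelian.Ext (Qn 𝔞 n) M i), ι n x = 0 → ι' n (φ n x) = 0 := by
    intro n x hx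
    obtain ⟨m, h, hm⟩ := hι.ker x hx
    rw [← hι'.compat h, ← hφ, hm, map_zero, map_zero]
  have hf : ∀ n x, f (ι n x) = ι' n (φ n x) := by
    intro n x
    set h := ι n x with hh
    have h1 : ι (max (N h) n) (res 𝔞 (le_max_left _ _) (X h) - res 𝔞 (le_max_right _ _) x) = 0 := by
      rw [map_sub, hι.compat, hι.compat, hX, hh, sub_self]
    have h2 := key _ _ h1
    rw [map_sub, map_sub, hφ, hφ, hι'.compat, hι'.compat, sub_eq_zero] at h2
    exact h2
  have rep2 : ∀ h1 h2 : H, ∃ n x y, ι n x = h1 ∧ ι n y = h2 := by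
    intro h1 h2
    refine ⟨max (N h1) (N h2), res 𝔞 (le_max_left _ _) (X h1), res 𝔞 (le_max_right _ _) (X h2), ?_, ?_⟩
    · rw [hι.compat, hX]
    · rw [hι.compat, hX]
  let F : H →ₗ[R] H' :=
    { toFun := f
      map_add' := by
        intro h1 h2
        obtain ⟨n, x, y, rfl, rfl⟩ := rep2 h1 h2
        rw [← map_add, hf, hf, hf, map_add, map_add]
      map_smul' := by
        intro r h1
        obtain ⟨n, x, rfl⟩ := hι.surj h1
        rw [← map_smul, hf, hf, map_smul, map_smul, RingHom.id_apply] }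
  refine ⟨LinearEquiv.ofBijective F ⟨?_, ?_⟩⟩
  · rw [← LinearMap.ker_eq_bot, LinearMap.ker_eq_bot']
    intro h hh
    obtain ⟨n, x, rfl⟩ := hι.surj h
    have h1 : ι' n (φ n x) = 0 := (hf n x).symm.trans hh
    obtain ⟨m, hm, h2⟩ := hι'.ker _ h1
    rw [← hφ] at h2
    obtain ⟨k, hk, h3⟩ := hinj _ _ h2
    rw [← hι.compat (hm.trans hk), ← res_res 𝔞 hm hk, h3, map_zero]
  · intro y
    obtain ⟨n, y, rfl⟩ := hι'.surj y
    obtain ⟨m, h, x, hx⟩ := hsurj n y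
    exact ⟨ι m x, (hf m x).trans (by rw [hx, hι'.compat])⟩

/-- The torsion submodule. -/
def Gam (M : Type u) [AddCommGroup M] [Module R M] : Submodule R M where
  carrier := {a | ∃ n, ∀ x ∈ 𝔞 ^ n, x • a = 0}
  add_mem' := by
    rintro a b ⟨n, hn⟩ ⟨m, hm⟩
    refine ⟨max n m, fun x hx => ?_⟩
    rw [smul_add, hn x (Ideal.pow_le_pow_right (le_max_left _ _) hx),
      hm x (Ideal.pow_le_pow_right (le_max_right _ _) hx), add_zero]
  zero_mem' := ⟨0, fun x _ => smul_zero x⟩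
  smul_mem' := by
    rintro r a ⟨n, hn⟩
    exact ⟨n, fun x hx => by rw [smul_comm, hn x hx, smul_zero]⟩

theorem Gam_tors (M : Type u) [AddCommGroup M] [Module R M] : IsTors 𝔞 (Gam 𝔞 M) := by
  rintro ⟨a, n, hn⟩
  exact ⟨n, fun x hx => Subtype.ext (hn x hx)⟩

/-- evaluation at 1 of a degree 0 class. -/
noncomputable def ev1 (M : ModuleCat.{u} R) (n : ℕ) : Abelian.Ext (Qn 𝔞 n) M 0 →ₗ[R] M :=
  (LinearMap.applyₗ (Submodule.Quotient.mk (1 : R) : R ⧸ 𝔞 ^ n)).comp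
    ((Abelian.Ext.linearEquiv₀ (R := R)).trans (ModuleCat.homLinearEquiv (S := R))).toLinearMap

theorem ev1_mk (M : ModuleCat.{u} R) (n : ℕ) (f : Qn 𝔞 n ⟶ M) :
    ev1 𝔞 M n (Abelian.Ext.mk₀ f) = f.hom (Submodule.Quotient.mk (1 : R) : R ⧸ 𝔞 ^ n) := by
  have : Abelian.Ext.linearEquiv₀ (R := R) (Abelian.Ext.mk₀ f) = f := by
    exact (Abelian.Ext.addEquiv₀).apply_symm_apply f
  unfold ev1
  rw [LinearMap.comp_apply, LinearEquiv.coe_coe, LinearEquiv.trans_apply, this]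
  rfl

theorem mk0_surj {X Y : ModuleCat.{u} R} (x : Abelian.Ext X Y 0) : ∃ f, Abelian.Ext.mk₀ f = x :=
  ⟨_, Abelian.Ext.mk₀_homEquiv₀_apply x⟩

end LC2
end WLC

namespace WLC
section LC3
variable {R : Type u} [CommRing R] (𝔞 : Ideal R)

theorem IsTors.unif {A K : Type u} [AddCommGroup A] [Module R A] [AddCommGroup K] [Module R K]
    [Module.Finite R K] (hA : IsTors 𝔞 A) (h : K →ₗ[R] A) :
    ∃ n, ∀ x ∈ 𝔞 ^ n, ∀ k, x • h k = 0 := by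
  obtain ⟨S, hS⟩ := Module.Finite.fg_top (R := R) (M := K)
  choose N hN using hA
  refine ⟨S.sup (fun s => N (h s)), fun x hx k => ?_⟩
  have hle : Submodule.span R (S : Set K) ≤ LinearMap.ker (x • h) := by
    rw [Submodule.span_le]
    intro s hs
    exact hN _ x (Ideal.pow_le_pow_right (Finset.le_sup (f := fun s => N (h s)) hs) hx)
  have : k ∈ LinearMap.ker (x • h) := hle (hS ▸ trivial)
  exact this

theorem inj_ext {A B I : Type u} [AddCommGroup A] [Module R A] [AddCommGroup B] [Module R B]
    [AddCommGroup I] [Module R I] [hI : Module.Injective R I] (f : A →ₗ[R] B) (g : A →ₗ[R] I)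
    (h : LinearMap.ker f ≤ LinearMap.ker g) : ∃ k : B →ₗ[R] I, ∀ a, k (f a) = g a := by
  obtain ⟨k, hk⟩ := hI.out (LinearMap.range f).subtype (Submodule.injective_subtype _)
    (((LinearMap.ker f).liftQ g h).comp f.quotKerEquivRange.symm.toLinearMap)
  refine ⟨k, fun a => ?_⟩
  have := hk ⟨f a, a, rfl⟩
  simp only [Submodule.subtype_apply] at this
  rw [this]
  have h2 : f.quotKerEquivRange.symm ⟨f a, a, rfl⟩ = (LinearMap.ker f).mkQ a := by
    rw [LinearEquiv.symm_apply_eq]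
    rfl
  rw [LinearMap.comp_apply, LinearEquiv.coe_coe, h2]
  exact Submodule.liftQ_apply _ _ _

theorem Gam_inj [IsNoetherianRing R] (I : Type u) [AddCommGroup I] [Module R I]
    [Module.Injective R I] : Module.Injective R (Gam 𝔞 I) := by
  apply Module.Baer.injective
  intro K g
  obtain ⟨n, hn⟩ := (Gam_tors 𝔞 I).unif 𝔞 g
  obtain ⟨k, hk⟩ := Ideal.exists_pow_inf_eq_pow_smul 𝔞 (K : Submodule R R)
  have hAR := hk (n + k) (Nat.le_add_left _ _)
  rw [Nat.add_sub_cancel] at hAR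
  have hvan : ∀ x (hx : x ∈ K), x ∈ 𝔞 ^ (n + k) → g ⟨x, hx⟩ = 0 := by
    intro x hx hx2
    have h1 : x ∈ (𝔞 ^ n • (K : Submodule R R)) := by
      have : x ∈ 𝔞 ^ (n + k) • (⊤ : Submodule R R) ⊓ K := ⟨by simpa using hx2, hx⟩
      rw [hAR] at this
      exact Submodule.smul_mono le_rfl inf_le_right this
    have h2 : ∃ hx' : x ∈ K, g ⟨x, hx'⟩ = 0 := by
      refine Submodule.smul_induction_on h1 ?_ ?_
      · intro r hr y hy
        refine ⟨Submodule.smul_mem _ _ hy, ?_⟩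
        have := hn r hr ⟨y, hy⟩
        rw [← map_smul] at this
        exact this
      · rintro y z ⟨hy, hy0⟩ ⟨hz, hz0⟩
        refine ⟨Submodule.add_mem _ hy hz, ?_⟩
        have := map_add g ⟨y, hy⟩ ⟨z, hz⟩
        rw [hy0, hz0, add_zero] at this
        exact this
    exact h2.2
  obtain ⟨F, hF⟩ := inj_ext (((𝔞 ^ (n + k)).mkQ).comp (K.subtype)) ((Gam 𝔞 I).subtype.comp g) (by
    rintro ⟨x, hx⟩ h
    rw [LinearMap.mem_ker, LinearMap.comp_apply, Submodule.mkQ_apply,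
      Submodule.Quotient.mk_eq_zero] at h
    rw [LinearMap.mem_ker, LinearMap.comp_apply, hvan x hx h, map_zero])
  have hy : ∀ z, F z ∈ Gam 𝔞 I := by
    intro z
    refine ⟨n + k, fun x hx => ?_⟩
    obtain ⟨z, rfl⟩ := Submodule.Quotient.mk_surjective _ z
    rw [← map_smul, ← Submodule.Quotient.mk_smul, (Submodule.Quotient.mk_eq_zero _).2, map_zero]
    exact Ideal.mul_mem_right _ _ hx
  refine ⟨(F.codRestrict _ hy).comp (𝔞 ^ (n + k)).mkQ, fun x hx => ?_⟩
  apply Subtype.ext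
  exact hF ⟨x, hx⟩

theorem Gam_quot [IsNoetherianRing R] (I : Type u) [AddCommGroup I] [Module R I]
    (y : I ⧸ Gam 𝔞 I) (n : ℕ) (hy : ∀ x ∈ 𝔞 ^ n, x • y = 0) : y = 0 := by
  obtain ⟨e, rfl⟩ := Submodule.Quotient.mk_surjective _ y
  rw [Submodule.Quotient.mk_eq_zero]
  have hy' : ∀ x : (𝔞 ^ n : Ideal R), (LinearMap.toSpanSingleton R I e).comp
      (𝔞 ^ n : Ideal R).subtype x ∈ Gam 𝔞 I := by
    rintro ⟨x, hx⟩
    have := hy x hx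
    rw [← Submodule.Quotient.mk_smul, Submodule.Quotient.mk_eq_zero] at this
    exact this
  obtain ⟨m, hm⟩ := (Gam_tors 𝔞 I).unif 𝔞 (LinearMap.codRestrict _ _ hy')
  refine ⟨m + n, fun x hx => ?_⟩
  rw [pow_add] at hx
  refine Submodule.mul_induction_on hx ?_ ?_
  · intro a ha b hb
    have := congrArg Subtype.val (hm a ha ⟨b, hb⟩)
    rw [mul_smul]
    exact this
  · intro a b ha hb
    rw [add_smul, ha, hb, add_zero]

theorem tors_hom_zero [IsNoetherianRing R] (X I : Type u) [AddCommGroup I] [Module R I]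
    [AddCommGroup X] [Module R X] (hX : IsTors 𝔞 X) (f : X →ₗ[R] I ⧸ Gam 𝔞 I) : f = 0 := by
  apply LinearMap.ext
  intro a
  obtain ⟨n, hn⟩ := hX a
  exact Gam_quot 𝔞 I _ n fun x hx => by rw [← map_smul, hn x hx, map_zero]

theorem exists_inj (M : Type u) [AddCommGroup M] [Module R M] :
    ∃ (I : Type u) (_ : AddCommGroup I) (_ : Module R I) (_ : Module.Injective R I)
      (f : M →ₗ[R] I), Function.Injective f := by
  let I := Injective.under (ModuleCat.of R M)
  refine ⟨I, inferInstance, inferInstance, ?_, (Injective.ι (ModuleCat.of R M)).hom, ?_⟩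
  · exact Module.injective_module_of_injective_object R I
      (inj := Injective.injective_under (ModuleCat.of R M))
  · exact (ModuleCat.mono_iff_injective _).1 (Injective.ι_mono _)

theorem ext_inj_zero {X : ModuleCat.{u} R} {I : Type u} [AddCommGroup I] [Module R I]
    [Module.Injective R I] {i : ℕ} (x : Abelian.Ext X (ModuleCat.of R I) (i + 1)) : x = 0 := by
  haveI : Injective (ModuleCat.of R I) := Module.injective_object_of_injective_module R I
  exact Abelian.Ext.eq_zero_of_injective x

theorem exists_emb [IsNoetherianRing R] (M : Type u) [AddCommGroup M] [Module R M] :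
    ∃ (J : Type u) (_ : AddCommGroup J) (_ : Module R J) (φ : M →ₗ[R] J),
      LinearMap.ker φ = Gam 𝔞 M ∧ ∀ (X : ModuleCat.{u} R), IsTors 𝔞 X → ∀ (i : ℕ)
        (x : Abelian.Ext X (ModuleCat.of R J) i), x = 0 := by
  obtain ⟨I, _, _, _, f, hf⟩ := exists_inj (R := R) M
  refine ⟨I ⧸ Gam 𝔞 I, inferInstance, inferInstance, (Gam 𝔞 I).mkQ.comp f, ?_, ?_⟩
  · ext a
    rw [LinearMap.mem_ker, LinearMap.comp_apply, Submodule.mkQ_apply,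
      Submodule.Quotient.mk_eq_zero]
    refine exists_congr fun n => forall_congr' fun x => forall_congr' fun _ => ?_
    rw [← map_smul, map_eq_zero_iff f hf]
  · intro X hX i x
    haveI := Gam_inj 𝔞 I
    cases i with
    | zero =>
      obtain ⟨g, rfl⟩ := mk0_surj x
      have : g = 0 := ModuleCat.hom_ext (tors_hom_zero 𝔞 X I hX g.hom)
      rw [this, Abelian.Ext.mk₀_zero]
    | succ i =>
      have s := ses_sub (Gam 𝔞 I)
      obtain ⟨y, hy⟩ := Abelian.Ext.covariant_sequence_exact₃ X s.se x rfl (ext_inj_zero _)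
      rw [← hy, ext_inj_zero y, Abelian.Ext.zero_comp]

theorem Qn_tors (n : ℕ) : IsTors 𝔞 (R ⧸ 𝔞 ^ n) := by
  intro a
  refine ⟨n, fun x hx => ?_⟩
  obtain ⟨a, rfl⟩ := Submodule.Quotient.mk_surjective _ a
  rw [← Submodule.Quotient.mk_smul, Submodule.Quotient.mk_eq_zero]
  exact Ideal.mul_mem_right _ _ hx

theorem Q0_tors : IsTors 𝔞 (R ⧸ 𝔞) := by
  intro a
  refine ⟨1, fun x hx => ?_⟩
  rw [pow_one] at hx
  obtain ⟨a, rfl⟩ := Submodule.Quotient.mk_surjective _ a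
  rw [← Submodule.Quotient.mk_smul, Submodule.Quotient.mk_eq_zero]
  exact Ideal.mul_mem_right _ _ hx

/-- the hom `R/𝔞^m → E` determined by an element killed by `𝔞^m`. -/
noncomputable def ofElt {E : Type u} [AddCommGroup E] [Module R E] (m : ℕ) (e : E)
    (h : ∀ x ∈ 𝔞 ^ m, x • e = 0) : Qn 𝔞 m ⟶ ModuleCat.of R E :=
  ModuleCat.ofHom (Submodule.liftQ (𝔞 ^ m) (LinearMap.toSpanSingleton R E e) h)

theorem ofElt_one {E : Type u} [AddCommGroup E] [Module R E] (m : ℕ) (e : E)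
    (h : ∀ x ∈ 𝔞 ^ m, x • e = 0) :
    (ofElt 𝔞 m e h).hom (Submodule.Quotient.mk (1 : R) : R ⧸ 𝔞 ^ m) = e := by
  exact one_smul R e

theorem hom_Qn_ext {m : ℕ} {M : ModuleCat.{u} R} {f g : Qn 𝔞 m ⟶ M}
    (h : f.hom (Submodule.Quotient.mk (1 : R) : R ⧸ 𝔞 ^ m) =
      g.hom (Submodule.Quotient.mk (1 : R) : R ⧸ 𝔞 ^ m)) : f = g := by
  apply ModuleCat.hom_ext
  apply LinearMap.ext
  intro y
  obtain ⟨y, rfl⟩ := Submodule.Quotient.mk_surjective _ y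
  have : (Submodule.Quotient.mk y : R ⧸ 𝔞 ^ m) = y • Submodule.Quotient.mk (1 : R) := by
    rw [← Submodule.Quotient.mk_smul, smul_eq_mul, mul_one]
  rw [this, map_smul, map_smul]
  exact congrArg (y • ·) h

theorem qmap_one {n m : ℕ} (h : n ≤ m) :
    (qmap 𝔞 h).hom (Submodule.Quotient.mk (1 : R) : R ⧸ 𝔞 ^ m) =
      (Submodule.Quotient.mk (1 : R) : R ⧸ 𝔞 ^ n) := rfl

theorem res_mk0 {M : ModuleCat.{u} R} {n m : ℕ} (h : n ≤ m) (f : Qn 𝔞 n ⟶ M) :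
    res 𝔞 h (Abelian.Ext.mk₀ f) = Abelian.Ext.mk₀ (qmap 𝔞 h ≫ f) := by
  unfold res
  rw [Abelian.Ext.mk₀_comp_mk₀]

theorem tors_death [IsNoetherianRing R] (j : ℕ) : ∀ (N : Type u) [AddCommGroup N] [Module R N]
    (_ : IsTors 𝔞 N) (n : ℕ) (x : Abelian.Ext (Qn 𝔞 n) (ModuleCat.of R N) (j + 1)),
    ∃ m, ∃ h : n ≤ m, res 𝔞 h x = 0 := by
  induction j with
  | zero =>
    intro N _ _ hN n x
    obtain ⟨I, _, _, _, f, hf⟩ := exists_inj (R := R) N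
    haveI := Gam_inj 𝔞 I
    have hfG : ∀ a, f a ∈ Gam 𝔞 I := fun a => by
      obtain ⟨k, hk⟩ := hN a
      exact ⟨k, fun x hx => by rw [← map_smul, hk x hx, map_zero]⟩
    let F := f.codRestrict _ hfG
    have s : Ses F (LinearMap.range F).mkQ :=
      ⟨fun a b hab => hf (congrArg Subtype.val hab), LinearMap.exact_map_mkQ_range F,
        Submodule.mkQ_surjective _⟩
    obtain ⟨y, hy⟩ := Abelian.Ext.covariant_sequence_exact₁ (Qn 𝔞 n) s.se x
      (ext_inj_zero (I := Gam 𝔞 I) _) rfl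
    obtain ⟨g, rfl⟩ := mk0_surj y
    obtain ⟨e, he⟩ := Submodule.mkQ_surjective (LinearMap.range F)
      (g.hom (Submodule.Quotient.mk (1 : R) : R ⧸ 𝔞 ^ n))
    obtain ⟨k, hk⟩ := Gam_tors 𝔞 I e
    refine ⟨max n k, le_max_left _ _, ?_⟩
    rw [← hy]
    erw [res_comp]
    rw [res_mk0]
    have : qmap 𝔞 (le_max_left n k) ≫ g = ofElt 𝔞 (max n k) e
        (fun x hx => hk x (Ideal.pow_le_pow_right (le_max_right _ _) hx)) ≫ s.S.g := by
      apply hom_Qn_ext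
      rw [ModuleCat.hom_comp, ModuleCat.hom_comp, LinearMap.comp_apply, LinearMap.comp_apply,
        ofElt_one, qmap_one, ← he]
      rfl
    rw [this, ← Abelian.Ext.mk₀_comp_mk₀, Abelian.Ext.comp_assoc, s.se.comp_extClass,
      Abelian.Ext.comp_zero]
    all_goals rfl
  | succ j ih =>
    intro N _ _ hN n x
    obtain ⟨I, _, _, _, f, hf⟩ := exists_inj (R := R) N
    haveI := Gam_inj 𝔞 I
    have hfG : ∀ a, f a ∈ Gam 𝔞 I := fun a => by
      obtain ⟨k, hk⟩ := hN a
      exact ⟨k, fun x hx => by rw [← map_smul, hk x hx, map_zero]⟩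
    let F := f.codRestrict _ hfG
    have s : Ses F (LinearMap.range F).mkQ :=
      ⟨fun a b hab => hf (congrArg Subtype.val hab), LinearMap.exact_map_mkQ_range F,
        Submodule.mkQ_surjective _⟩
    obtain ⟨y, hy⟩ := Abelian.Ext.covariant_sequence_exact₁ (Qn 𝔞 n) s.se x
      (ext_inj_zero (I := Gam 𝔞 I) _) rfl
    obtain ⟨m, h, hm⟩ := ih _ ((Gam_tors 𝔞 I).quot _) n y
    refine ⟨m, h, ?_⟩
    rw [← hy]
    erw [res_comp]
    rw [hm, Abelian.Ext.zero_comp]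

end LC3
end WLC

namespace WLC
section LC4
variable {R : Type u} [CommRing R] (𝔞 : Ideal R)

/-- Local cohomology as a type. -/
abbrev lc (i : ℕ) (M : Type u) [AddCommGroup M] [Module R M] : Type u :=
  (localCohomology 𝔞 i).obj (ModuleCat.of R M)

theorem isLim_Gam (M : Type u) [AddCommGroup M] [Module R M] :
    ∃ ι : ∀ n, Abelian.Ext (Qn 𝔞 n) (ModuleCat.of R M) 0 →ₗ[R] Gam 𝔞 M,
      IsLim 𝔞 (ModuleCat.of R M) 0 (Gam 𝔞 M) ι := by
  have hmem : ∀ n x, ev1 𝔞 (ModuleCat.of R M) n x ∈ Gam 𝔞 M := by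
    intro n x
    obtain ⟨f, rfl⟩ := mk0_surj x
    rw [ev1_mk]
    refine ⟨n, fun x hx => ?_⟩
    have h0 : x • (Submodule.Quotient.mk (1 : R) : R ⧸ 𝔞 ^ n) = 0 := by
      rw [← Submodule.Quotient.mk_smul, Submodule.Quotient.mk_eq_zero]
      exact Ideal.mul_mem_right _ _ hx
    have h1 := map_smul f.hom x (Submodule.Quotient.mk (1 : R) : R ⧸ 𝔞 ^ n)
    rw [h0, map_zero] at h1
    exact h1.symm
  refine ⟨fun n => (ev1 𝔞 (ModuleCat.of R M) n).codRestrict _ (hmem n), ?_, ?_, ?_⟩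
  · rintro ⟨e, n, hn⟩
    refine ⟨n, Abelian.Ext.mk₀ (ofElt 𝔞 n e hn), Subtype.ext ?_⟩
    rw [LinearMap.codRestrict_apply, ev1_mk, ofElt_one]
  · intro n m h x
    obtain ⟨f, rfl⟩ := mk0_surj x
    apply Subtype.ext
    rw [LinearMap.codRestrict_apply, LinearMap.codRestrict_apply, res_mk0, ev1_mk, ev1_mk]
    rfl
  · intro n x hx
    obtain ⟨f, rfl⟩ := mk0_surj x
    have h1 := congrArg Subtype.val hx
    rw [LinearMap.codRestrict_apply, ev1_mk] at h1
    refine ⟨n, le_rfl, ?_⟩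
    have : f = 0 := hom_Qn_ext 𝔞 h1
    rw [this, Abelian.Ext.mk₀_zero, res_zero]

theorem lc0 (M : Type u) [AddCommGroup M] [Module R M] :
    Nonempty (lc 𝔞 0 M ≃ₗ[R] Gam 𝔞 M) := by
  obtain ⟨ι, hι⟩ := exists_isLim 𝔞 (ModuleCat.of R M) 0
  obtain ⟨ι', hι'⟩ := isLim_Gam 𝔞 M
  exact indEquiv 𝔞 hι hι' (fun n => LinearMap.id) (fun h x => rfl)
    (fun n x hx => ⟨n, le_rfl, by rw [show x = 0 from hx, res_zero]⟩)
    (fun n y => ⟨n, le_rfl, res 𝔞 le_rfl y, rfl⟩)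

section
variable {A B C : Type u} [AddCommGroup A] [AddCommGroup B] [AddCommGroup C]
  [Module R A] [Module R B] [Module R C] {f : A →ₗ[R] B} {g : B →ₗ[R] C}

theorem lc_mod_tors [IsNoetherianRing R] (s : Ses f g) (hA : IsTors 𝔞 A) (i : ℕ) :
    Nonempty (lc 𝔞 (i + 1) B ≃ₗ[R] lc 𝔞 (i + 1) C) := by
  obtain ⟨ι, hι⟩ := exists_isLim 𝔞 (ModuleCat.of R B) (i + 1)
  obtain ⟨ι', hι'⟩ := exists_isLim 𝔞 (ModuleCat.of R C) (i + 1)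
  refine indEquiv 𝔞 hι hι'
    (fun n => (Abelian.Ext.mk₀ (s.S.g)).postcompOfLinear R (Qn 𝔞 n) (add_zero (i + 1))) ?_ ?_ ?_
  · intro n m h x
    exact (res_comp 𝔞 h x (Abelian.Ext.mk₀ (s.S.g)) (add_zero (i + 1))).symm
  · intro n x hx
    obtain ⟨y, hy⟩ := Abelian.Ext.covariant_sequence_exact₂ (Qn 𝔞 n) s.se x hx
    obtain ⟨m, h, hm⟩ := tors_death 𝔞 i A hA n y
    refine ⟨m, h, ?_⟩
    rw [← hy]
    erw [res_comp]
    rw [hm, Abelian.Ext.zero_comp]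
  · intro n y
    obtain ⟨m, h, hm⟩ := tors_death 𝔞 (i + 1) A hA n
      (Abelian.Ext.comp (X := Qn 𝔞 n) (Y := s.S.X₃) y s.se.extClass rfl)
    erw [res_comp] at hm
    obtain ⟨x, hx⟩ := Abelian.Ext.covariant_sequence_exact₃ (Qn 𝔞 m) s.se (res 𝔞 h y) rfl hm
    exact ⟨m, h, x, hx⟩

theorem lc_shift (s : Ses f g)
    (hB : ∀ (X : ModuleCat.{u} R), IsTors 𝔞 X → ∀ (i : ℕ)
        (x : Abelian.Ext X (ModuleCat.of R B) i), x = 0) (i : ℕ) :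
    Nonempty (lc 𝔞 i C ≃ₗ[R] lc 𝔞 (i + 1) A) := by
  obtain ⟨ι, hι⟩ := exists_isLim 𝔞 (ModuleCat.of R C) i
  obtain ⟨ι', hι'⟩ := exists_isLim 𝔞 (ModuleCat.of R A) (i + 1)
  refine indEquiv 𝔞 hι hι'
    (fun n => (s.se.extClass).postcompOfLinear R (Qn 𝔞 n) rfl) ?_ ?_ ?_
  · intro n m h x
    exact (res_comp 𝔞 h x s.se.extClass rfl).symm
  · intro n x hx
    obtain ⟨y, hy⟩ := Abelian.Ext.covariant_sequence_exact₃ (Qn 𝔞 n) s.se x rfl hx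
    refine ⟨n, le_rfl, ?_⟩
    have h0 : y = 0 := hB _ (Qn_tors 𝔞 n) _ y
    rw [← hy, h0, Abelian.Ext.zero_comp]
    exact res_zero 𝔞 _
  · intro n y
    obtain ⟨x, hx⟩ := Abelian.Ext.covariant_sequence_exact₁ (Qn 𝔞 n) s.se (res 𝔞 le_rfl y)
      (hB _ (Qn_tors 𝔞 n) _ _) rfl
    exact ⟨n, le_rfl, x, hx⟩

end

/-- One step: `L` with `H^i(L) = H^{i+1}(M)`. -/
theorem lcStep [IsNoetherianRing R] (M : Type u) [AddCommGroup M] [Module R M]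
    (hM : ∀ j, EFin (Q0 𝔞) M j) :
    EFin (Q0 𝔞) (Gam 𝔞 M) 0 ∧ EFin (Q0 𝔞) (Gam 𝔞 M) 1 ∧
    ∃ (L : Type u) (_ : AddCommGroup L) (_ : Module R L),
      (∀ i, Nonempty (lc 𝔞 i L ≃ₗ[R] lc 𝔞 (i + 1) M)) ∧
      ((∀ j, EFin (Q0 𝔞) (Gam 𝔞 M) j) → ∀ j, EFin (Q0 𝔞) L j) := by
  obtain ⟨J, _, _, φ, hφ, hJ⟩ := exists_emb 𝔞 M
  have s1 := ses_ker φ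
  have s2 := ses_sub (LinearMap.range φ)
  have eK : LinearMap.ker φ ≃ₗ[R] Gam 𝔞 M := LinearEquiv.ofEq _ _ hφ
  have hJf : ∀ j, EFin (Q0 𝔞) J j := fun j => by
    unfold EFin
    haveI : Subsingleton (Abelian.Ext (Q0 𝔞) (ModuleCat.of R J) j) :=
      subsingleton_of_forall_eq 0 (hJ _ (Q0_tors 𝔞) j)
    infer_instance
  have hK : IsTors 𝔞 (LinearMap.ker φ) := by
    rw [hφ]
    exact Gam_tors 𝔞 M
  refine ⟨(s1.e0 _ (hM 0)).equiv _ eK, (s1.e3 _ (s2.e0 _ (hJf 0)) (hM 1)).equiv _ eK,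
    J ⧸ LinearMap.range φ, inferInstance, inferInstance, ?_, ?_⟩
  · intro i
    obtain ⟨e1⟩ := lc_mod_tors 𝔞 s1 hK i
    obtain ⟨e2⟩ := lc_shift 𝔞 s2 hJ i
    exact ⟨e2.trans e1.symm⟩
  · intro hG j
    have h1 : ∀ j, EFin (Q0 𝔞) (LinearMap.range φ) j := fun j =>
      s1.e2 _ (hM j) ((hG (j + 1)).equiv _ eK.symm)
    exact s2.e2 _ (hJf j) (h1 (j + 1))

theorem main_aux [IsNoetherianRing R] (t : ℕ) : ∀ (M : Type u) [AddCommGroup M] [Module R M]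
    (_ : ∀ j, EFin (Q0 𝔞) M j)
    (_ : ∀ i < t, ∀ N : Submodule R (lc 𝔞 i M), (associatedPrimes R (lc 𝔞 i M ⧸ N)).Finite),
    (∀ i < t, ∀ j, EFin (Q0 𝔞) (lc 𝔞 i M) j) ∧ (∀ i ≤ t, IsTors 𝔞 (lc 𝔞 i M)) ∧
      EFin (Q0 𝔞) (lc 𝔞 t M) 0 ∧ EFin (Q0 𝔞) (lc 𝔞 t M) 1 := by
  have tr : ∀ {A B : Type u} [AddCommGroup A] [Module R A] [AddCommGroup B] [Module R B]
      (e : A ≃ₗ[R] B), IsTors 𝔞 A → IsTors 𝔞 B := by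
    intro A B _ _ _ _ e hA b
    obtain ⟨n, hn⟩ := hA (e.symm b)
    refine ⟨n, fun x hx => e.symm.injective ?_⟩
    rw [map_smul, hn x hx, map_zero]
  have ta : ∀ {A B : Type u} [AddCommGroup A] [Module R A] [AddCommGroup B] [Module R B]
      (e : A ≃ₗ[R] B), (∀ N : Submodule R A, (associatedPrimes R (A ⧸ N)).Finite) →
      ∀ N : Submodule R B, (associatedPrimes R (B ⧸ N)).Finite := by
    intro A B _ _ _ _ e hA N
    have := hA (N.comap e.toLinearMap)
    have e2 : (A ⧸ N.comap e.toLinearMap) ≃ₗ[R] B ⧸ N :=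
      Submodule.Quotient.equiv _ _ e (Submodule.map_comap_eq_of_surjective e.surjective N)
    rwa [LinearEquiv.AssociatedPrimes.eq e2] at this
  induction t with
  | zero =>
    intro M _ _ hM _
    obtain ⟨e⟩ := lc0 𝔞 M
    obtain ⟨h0, h1, -⟩ := lcStep 𝔞 M hM
    refine ⟨fun i hi => absurd hi (Nat.not_lt_zero i), fun i hi => ?_, h0.equiv _ e.symm,
      h1.equiv _ e.symm⟩
    obtain rfl := Nat.le_zero.1 hi
    exact tr e.symm (Gam_tors 𝔞 M)
  | succ t ih =>
    intro M _ _ hM hW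
    obtain ⟨e⟩ := lc0 𝔞 M
    obtain ⟨h0, h1, L, _, _, hL, hEL⟩ := lcStep 𝔞 M hM
    have hG := core 𝔞 (Gam 𝔞 M) (Gam_tors 𝔞 M) (ta e (hW 0 (Nat.succ_pos t))) h0 h1
    obtain ⟨a1, a2, a3, a4⟩ := ih L (hEL hG) (fun i hi => ta (hL i).some.symm (hW (i + 1) (by omega)))
    refine ⟨?_, ?_, a3.equiv _ (hL t).some, a4.equiv _ (hL t).some⟩
    · intro i hi j
      cases i with
      | zero => exact (hG j).equiv _ e.symm
      | succ i => exact (a1 i (by omega) j).equiv _ (hL i).some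
    · intro i hi
      cases i with
      | zero => exact tr e.symm (Gam_tors 𝔞 M)
      | succ i => exact tr (hL i).some (a2 i (by omega))

theorem ass_fin [IsNoetherianRing R] {A : Type u} [AddCommGroup A] [Module R A]
    (hA : IsTors 𝔞 A) (h : EFin (Q0 𝔞) A 0) : (associatedPrimes R A).Finite := by
  haveI : Module.Finite R (Submodule.torsionBySet R A (𝔞 : Set R)) :=
    Module.Finite.iff_fg.2 (soc_fg 𝔞 h)
  refine (associatedPrimes.finite R (Submodule.torsionBySet R A (𝔞 : Set R))).subset ?_
  intro q hq
  rw [assoc_iff] at hq ⊢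
  obtain ⟨hp, x, hx⟩ := hq
  refine ⟨hp, ?_⟩
  obtain ⟨n, hn⟩ := hA x
  have hle : 𝔞 ≤ q := hp.le_of_pow_le (n := n) fun r hr => (hx r).2 (hn r hr)
  refine ⟨⟨x, ?_⟩, fun r => ?_⟩
  · rw [Submodule.mem_torsionBySet_iff]
    exact fun r => (hx _).1 (hle r.2)
  · rw [hx, Subtype.ext_iff]
    rfl

end LC4
end WLC

theorem stmt10 [IsNoetherianRing R] (𝔞 : Ideal R) (M : ModuleCat.{u} R) [Module.Finite R M]
    (t : ℕ) (h : ∀ i ≤ t, IsWeaklyLaskerian R ((localCohomology 𝔞 i).obj M)) :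
    (∀ i ≤ t, IsCofinite R 𝔞 ((localCohomology 𝔞 i).obj M)) ∧
      Module.Finite R ((R ⧸ 𝔞) →ₗ[R] ((localCohomology 𝔞 (t + 1)).obj M)) ∧
      Module.Finite R
        (extModule R 1 (ModuleCat.of R (R ⧸ 𝔞)) ((localCohomology 𝔞 (t + 1)).obj M)) ∧
      (associatedPrimes R ((localCohomology 𝔞 (t + 1)).obj M)).Finite := by
  have hM : ∀ j, WLC.EFin (WLC.Q0 𝔞) M j := fun j => WLC.EFin.of_finite _ j
  obtain ⟨h1, h2, h3, h4⟩ := WLC.main_aux 𝔞 (t + 1) M hM (fun i hi => h i (by omega))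
  refine ⟨fun i hi => ⟨fun p hp => ?_, fun j => ?_⟩, ?_, ?_, ?_⟩
  · exact (h2 i (by omega)).supp hp
  · have hf : Module.Finite R (Abelian.Ext (WLC.Q0 𝔞) ((localCohomology 𝔞 i).obj M) j) :=
      h1 i (by omega) j
    exact Module.Finite.equiv (WLC.cmp (ProjectiveResolution.of (WLC.Q0 𝔞))
      ((localCohomology 𝔞 i).obj M) j).symm
  · exact (WLC.hom_fin_iff 𝔞 _).1 h3
  · have hf : Module.Finite R (Abelian.Ext (WLC.Q0 𝔞) ((localCohomology 𝔞 (t + 1)).obj M) 1) := h4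
    exact Module.Finite.equiv (WLC.cmp (ProjectiveResolution.of (WLC.Q0 𝔞))
      ((localCohomology 𝔞 (t + 1)).obj M) 1).symm
  · exact WLC.ass_fin 𝔞 (h2 (t + 1) le_rfl) h3
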